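/- arXiv:2203.12248 — 4 statements merged into one kernel-verified Lean document; each statement's English description precedes it below -/
import Mathlib

section
/- Let n be a positive integer and G a finite simple graph on n vertices. Let v_1, v_2, …, v_n be an ordering of V(G) and, for every i ∈ [n], let S_i be a subset of V(G) such that N_G[v_i] ∩ {v_ℓ : ℓ ∈ [i]} ⊆ S_i ⊆ {v_ℓ : ℓ ∈ [i]}, where N_G[v] is the closed neighborhood of v. Let w_1 and w_2 be positive integers. If for every i ∈ [n] we have |S_i| ≤ w_1 and |(⋃_{j ∈ [n], v_i ∈ S_j} S_j) ∩ {v_ℓ : ℓ ∈ [i]}| ≤ w_2, then G is conflict-free (w_1+w_2−1)-choosable. -/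
open SimpleGraph

universe u v

namespace CFPaper

variable {V : Type u} {W : Type v}

/-- A coloring is proper if adjacent vertices get distinct colors. -/
def Proper (G : SimpleGraph V) (φ : V → ℕ) : Prop :=
  ∀ ⦃u w : V⦄, G.Adj u w → φ u ≠ φ w

/-- A coloring is conflict-free if every non-isolated vertex has a color appearing
exactly once in its open neighborhood. -/
def ConflictFree (G : SimpleGraph V) (φ : V → ℕ) : Prop :=
  ∀ v : V, (G.neighborSet v).Nonempty →
    ∃ c : ℕ, {u : V | G.Adj v u ∧ φ u = c}.ncard = 1

/-- `G` is conflict-free `k`-choosable (k a real number). -/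
def CFChoosable (G : SimpleGraph V) (k : ℝ) : Prop :=
  ∀ L : V → Finset ℕ, (∀ v, k ≤ ((L v).card : ℝ)) →
    ∃ φ : V → ℕ, (∀ v, φ v ∈ L v) ∧ Proper G φ ∧ ConflictFree G φ

/-- A coloring is `S`-achieved if for every non-isolated vertex there are `s ∈ S`
and a color appearing exactly `s` times in its open neighborhood. -/
def SAchieved (S : Set ℕ) (G : SimpleGraph V) (φ : V → ℕ) : Prop :=
  ∀ v : V, (G.neighborSet v).Nonempty →
    ∃ s ∈ S, ∃ c : ℕ, {u : V | G.Adj v u ∧ φ u = c}.ncard = s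

/-- `G` is `S`-achieved `t`-choosable. -/
def SChoosable (S : Set ℕ) (G : SimpleGraph V) (t : ℕ) : Prop :=
  ∀ L : V → Finset ℕ, (∀ v, t ≤ (L v).card) →
    ∃ φ : V → ℕ, (∀ v, φ v ∈ L v) ∧ Proper G φ ∧ SAchieved S G φ

/-- `G` is properly `S`-achieved `t`-colorable (colors from `{1,…,t}`). -/
def SColorable (S : Set ℕ) (G : SimpleGraph V) (t : ℕ) : Prop :=
  ∃ φ : V → ℕ, (∀ v, φ v ∈ Finset.Icc 1 t) ∧ Proper G φ ∧ SAchieved S G φ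

/-- `G` has a proper conflict-free coloring with colors from `{1,…,t}`. -/
def PCFColorable (G : SimpleGraph V) (t : ℕ) : Prop :=
  ∃ φ : V → ℕ, (∀ v, φ v ∈ Finset.Icc 1 t) ∧ Proper G φ ∧ ConflictFree G φ

/-- The proper conflict-free chromatic number. -/
noncomputable def chiPCF (G : SimpleGraph V) : ℕ := sInf {t : ℕ | PCFColorable G t}

/-- `(B x : x : ι)` is a tree-decomposition of `G` with underlying tree `T`. -/
structure IsTreeDecomp (G : SimpleGraph V) {ι : Type*} (T : SimpleGraph ι) (B : ι → Set V) :
    Prop where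
  tree : T.IsTree
  bags_connected : ∀ vv : V, (T.induce {x : ι | vv ∈ B x}).Connected
  edge_in_bag : ∀ ⦃a b : V⦄, G.Adj a b → ∃ x : ι, a ∈ B x ∧ b ∈ B x

/-- The torso of a tree-decomposition at a node `x`. -/
def torso (G : SimpleGraph V) {ι : Type*} (T : SimpleGraph ι) (B : ι → Set V) (x : ι) :
    SimpleGraph (B x) :=
  SimpleGraph.fromRel fun a b =>
    G.Adj a b ∨ ∃ y : ι, T.Adj x y ∧ (a : V) ∈ B y ∧ (b : V) ∈ B y

/-- The frame of a tree-decomposition at a node `x`. -/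
def frame (G : SimpleGraph V) {ι : Type*} (T : SimpleGraph ι) (B : ι → Set V) (x : ι) :
    Set (Set (B x)) :=
  {s : Set (B x) | ∃ y : ι, T.Adj x y ∧ s = {a : B x | (a : V) ∈ B y}}

/-- A subgraph `H` of `G` is `C`-compatible: every edge of `H` has both ends in some member
of `C`. -/
def Compatible (C : Set (Set V)) (H : SimpleGraph V) : Prop :=
  ∀ ⦃a b : V⦄, H.Adj a b → ∃ c ∈ C, a ∈ c ∧ b ∈ c

/-- `G` is `(S,C,L,t)`-extendable. -/
def Extendable (S : Set ℕ) (G : SimpleGraph V) (C : Set (Set V)) (L : V → Finset ℕ)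
    (t : ℕ) : Prop :=
  ∀ (Wc : Set V), G.IsClique Wc → Wc.ncard ≤ t →
  ∀ (H : SimpleGraph V), H ≤ G → Compatible C H →
  ∀ (φW : V → ℕ), (∀ w ∈ Wc, φW w ∈ L w) →
    (∀ a ∈ Wc, ∀ b ∈ Wc, G.Adj a b → φW a ≠ φW b) →
  ∀ (f : V → ℕ) (g : V → Bool),
  ∃ φ : V → ℕ, (∀ w, φ w ∈ L w) ∧ Proper G φ ∧ (∀ w ∈ Wc, φ w = φW w) ∧
    (∀ w ∈ Wc, g w = false → ∀ u : V, G.Adj w u → u ∉ Wc → φ u ≠ f w) ∧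
    (∀ w : V, (w ∉ Wc ∨ (w ∈ Wc ∧ g w = true)) →
      (((G \ H).neighborSet w = ∅) ∨
        ∃ c : ℕ, {u : V | (G \ H).Adj w u ∧ φ u = c}.ncard ∈ S))

/-- `H` is a minor of `G` (branch-set definition). -/
def IsMinor (H : SimpleGraph W) (G : SimpleGraph V) : Prop :=
  ∃ ρ : W → Set V,
    (∀ w : W, (G.induce (ρ w)).Connected) ∧
    (Pairwise fun a b => Disjoint (ρ a) (ρ b)) ∧
    ∀ ⦃a b : W⦄, H.Adj a b → ∃ x ∈ ρ a, ∃ y ∈ ρ b, G.Adj x y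

/-- The spanning subgraph of `G` whose edges are those between `A` and its complement. -/
def crossGraph (G : SimpleGraph V) (A : Set V) : SimpleGraph V :=
  SimpleGraph.fromRel fun x y => G.Adj x y ∧ x ∈ A ∧ y ∉ A

/-- The odd contraction of `G` determined by the bipartition `{A, Aᶜ}`: contract each
connected component of the spanning bipartite subgraph between `A` and `Aᶜ`. -/
def oddContract (G : SimpleGraph V) (A : Set V) :
    SimpleGraph ((crossGraph G A).ConnectedComponent) :=
  SimpleGraph.fromRel fun Ct Dt =>
    ∃ x y : V, (crossGraph G A).connectedComponentMk x = Ct ∧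
      (crossGraph G A).connectedComponentMk y = Dt ∧ G.Adj x y

/-- `OddContractions G H`: `H` is obtained from `G` by repeatedly applying odd
contractions. -/
inductive OddContractions : ∀ {α : Type u}, SimpleGraph α → ∀ {β : Type u}, SimpleGraph β → Prop
  | refl {α : Type u} (G : SimpleGraph α) : OddContractions G G
  | step {α : Type u} (G : SimpleGraph α) (A : Set α) {β : Type u} {H : SimpleGraph β} :
      OddContractions (oddContract G A) H → OddContractions G H

/-- `H` is an odd minor of `G`: `H` is isomorphic to a graph obtained from a subgraph of `G`
by repeatedly applying odd contractions. -/
def IsOddMinor (H : SimpleGraph W) (G : SimpleGraph V) : Prop :=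
  ∃ (s : Set V) (G₀ : SimpleGraph s), G₀ ≤ G.induce s ∧
    ∃ (β : Type u) (K : SimpleGraph β), OddContractions G₀ K ∧ Nonempty (H ≃g K)

/-- The graph obtained from `H` by subdividing each edge `e` exactly `n e` times, where
`σ` chooses an orientation of each edge. -/
def subdivGraph (H : SimpleGraph W) (σ : H.edgeSet → W × W) (n : H.edgeSet → ℕ) :
    SimpleGraph (W ⊕ (Σ e : H.edgeSet, Fin (n e))) :=
  SimpleGraph.fromRel fun a b =>
    (∃ (x y : W) (h : H.Adj x y),
        a = Sum.inl x ∧ b = Sum.inl y ∧ n ⟨s(x, y), H.mem_edgeSet.mpr h⟩ = 0) ∨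
    (∃ (x : W) (p : Σ e : H.edgeSet, Fin (n e)), a = Sum.inl x ∧ b = Sum.inr p ∧
        ((x = (σ p.1).1 ∧ (p.2 : ℕ) = 0) ∨ (x = (σ p.1).2 ∧ (p.2 : ℕ) = n p.1 - 1))) ∨
    (∃ p q : Σ e : H.edgeSet, Fin (n e), a = Sum.inr p ∧ b = Sum.inr q ∧ p.1 = q.1 ∧
        (p.2 : ℕ) + 1 = (q.2 : ℕ))

/-- `σ` is a valid orientation of the edges of `H`. -/
def ValidOrientation (H : SimpleGraph W) (σ : H.edgeSet → W × W) : Prop :=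
  ∀ e : H.edgeSet, s((σ e).1, (σ e).2) = (e : Sym2 W)

/-- `G` contains a subdivision of `H` as a subgraph. -/
def ContainsSubdivision (H : SimpleGraph W) (G : SimpleGraph V) : Prop :=
  ∃ (σ : H.edgeSet → W × W) (n : H.edgeSet → ℕ), ValidOrientation H σ ∧
    ∃ f : subdivGraph H σ n →g G, Function.Injective f

/-- The strong product of two graphs. -/
def strongProd {α : Type*} {β : Type*} (A : SimpleGraph α) (B : SimpleGraph β) :
    SimpleGraph (α × β) :=
  SimpleGraph.fromRel fun p q =>
    (A.Adj p.1 q.1 ∧ p.2 = q.2) ∨ (p.1 = q.1 ∧ B.Adj p.2 q.2) ∨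
      (A.Adj p.1 q.1 ∧ B.Adj p.2 q.2)


/-- A layering of `G`. -/
def IsLayering (G : SimpleGraph V) (Vl : ℕ → Set V) : Prop :=
  (∀ vv : V, ∃ i : ℕ, vv ∈ Vl i) ∧ (Pairwise fun i j => Disjoint (Vl i) (Vl j)) ∧
  ∀ ⦃a b : V⦄, G.Adj a b → ∃ i : ℕ, a ∈ Vl i ∪ Vl (i + 1) ∧ b ∈ Vl i ∪ Vl (i + 1)

theorem greedy_aux {n : ℕ} (F : Fin n → Finset (Fin n)) (hF : ∀ i, ∀ k ∈ F i, k < i)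
    (L : Fin n → Finset ℕ) (hL : ∀ i, (F i).card < (L i).card) :
    ∃ φ : Fin n → ℕ, (∀ i, φ i ∈ L i) ∧ ∀ i, ∀ k ∈ F i, φ i ≠ φ k := by
  classical
  have key : ∀ (i : Fin n) (r : ∀ k, k < i → ℕ),
      ∃ c ∈ L i, ∀ k (hk : k ∈ F i), c ≠ r k (hF i k hk) := by
    intro i r
    have h1 : ((F i).attach.image (fun k => r k.1 (hF i k.1 k.2))).card < (L i).card := by
      refine lt_of_le_of_lt Finset.card_image_le ?_
      simpa using hL i
    obtain ⟨c, hc, hc'⟩ := Finset.exists_mem_notMem_of_card_lt_card h1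
    refine ⟨c, hc, fun k hk h => hc' ?_⟩
    exact Finset.mem_image.2 ⟨⟨k, hk⟩, Finset.mem_attach _ _, h.symm⟩
  choose p hp1 hp2 using key
  have wf : WellFounded (fun a b : Fin n => a < b) := wellFounded_lt
  refine ⟨wf.fix (C := fun _ => ℕ) p, fun i => ?_, fun i k hk => ?_⟩
  · rw [wf.fix_eq]; exact hp1 _ _
  · rw [wf.fix_eq]
    exact hp2 i (fun y _ => wf.fix (C := fun _ => ℕ) p y) k hk

theorem stmt15 (n : ℕ) (hn : 0 < n) (V : Type) [Fintype V] (G : SimpleGraph V)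
    (hcard : Fintype.card V = n)
    (v : Fin n → V) (hv : Function.Bijective v)
    (Sv : Fin n → Set V)
    (hS1 : ∀ i : Fin n,
      (insert (v i) (G.neighborSet (v i))) ∩ {u : V | ∃ ℓ ≤ i, v ℓ = u} ⊆ Sv i)
    (hS2 : ∀ i : Fin n, Sv i ⊆ {u : V | ∃ ℓ ≤ i, v ℓ = u})
    (w₁ w₂ : ℕ) (hw₁ : 0 < w₁) (hw₂ : 0 < w₂)
    (hB1 : ∀ i : Fin n, (Sv i).ncard ≤ w₁)
    (hB2 : ∀ i : Fin n,
      ((⋃ j ∈ {j : Fin n | v i ∈ Sv j}, Sv j) ∩ {u : V | ∃ ℓ ≤ i, v ℓ = u}).ncard ≤ w₂) :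
    CFChoosable G ((w₁ + w₂ - 1 : ℕ) : ℝ) := by
  classical
  intro L hL
  have hL' : ∀ u, w₁ + w₂ - 1 ≤ (L u).card := fun u => by exact_mod_cast hL u
  have hinj := hv.1
  -- the first neighbor of each vertex
  have hf : ∀ j : Fin n, ∃ m : Fin n, (∃ k, G.Adj (v j) (v k)) →
      G.Adj (v j) (v m) ∧ ∀ k, G.Adj (v j) (v k) → m ≤ k := by
    intro j
    by_cases h : ∃ k, G.Adj (v j) (v k)
    · obtain ⟨m, hm, hmin⟩ := WellFounded.has_min
        (wellFounded_lt : WellFounded (fun a b : Fin n => a < b)) {k | G.Adj (v j) (v k)} h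
      exact ⟨m, fun _ => ⟨hm, fun k hk => not_lt.1 (hmin k hk)⟩⟩
    · exact ⟨j, fun h' => absurd h' h⟩
  choose f hf using hf
  let A : Fin n → Finset (Fin n) := fun i =>
    Finset.univ.filter (fun k => k < i ∧ ∃ j, v i ∈ Sv j ∧ v k ∈ Sv j)
  let D : Fin n → Finset (Fin n) := fun i =>
    Finset.univ.filter (fun j => j < i ∧ v j ∈ Sv i)
  let B : Fin n → Finset (Fin n) := fun i => ((D i).image f).filter (fun k => k < i)
  have hself : ∀ i, v i ∈ Sv i := fun i => hS1 i ⟨Set.mem_insert _ _, i, le_rfl, rfl⟩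
  have hback : ∀ i k, k < i → G.Adj (v i) (v k) → v k ∈ Sv i := fun i k hk h =>
    hS1 i ⟨Set.mem_insert_of_mem _ h, k, hk.le, rfl⟩
  have hA : ∀ i, (A i).card + 1 ≤ w₂ := by
    intro i
    have hi : i ∉ A i := by simp [A]
    rw [← Finset.card_insert_of_notMem hi, ← Finset.card_image_of_injective _ hinj,
      ← Set.ncard_coe_finset]
    refine le_trans (Set.ncard_le_ncard ?_ (Set.toFinite _)) (hB2 i)
    intro u hu
    simp only [Finset.coe_image, Set.mem_image, Finset.mem_coe, Finset.mem_insert] at hu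
    obtain ⟨k, hk, rfl⟩ := hu
    rcases hk with rfl | hk
    · exact ⟨Set.mem_biUnion (hself k) (hself k), k, le_rfl, rfl⟩
    · obtain ⟨hk1, j, hj1, hj2⟩ := (Finset.mem_filter.1 hk).2
      exact ⟨Set.mem_biUnion (show j ∈ {j | v i ∈ Sv j} from hj1) hj2, k, hk1.le, rfl⟩
  have hD : ∀ i, (D i).card + 1 ≤ w₁ := by
    intro i
    have hi : i ∉ D i := by simp [D]
    rw [← Finset.card_insert_of_notMem hi, ← Finset.card_image_of_injective _ hinj,
      ← Set.ncard_coe_finset]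
    refine le_trans (Set.ncard_le_ncard ?_ (Set.toFinite _)) (hB1 i)
    intro u hu
    simp only [Finset.coe_image, Set.mem_image, Finset.mem_coe, Finset.mem_insert] at hu
    obtain ⟨k, hk, rfl⟩ := hu
    rcases hk with rfl | hk
    · exact hself k
    · exact (Finset.mem_filter.1 hk).2.2
  have hB : ∀ i, (B i).card ≤ (D i).card := fun i =>
    (Finset.card_filter_le _ _).trans Finset.card_image_le
  obtain ⟨ψ, hψ1, hψ2⟩ := greedy_aux (fun i => A i ∪ B i)
    (by
      intro i k hk
      rcases Finset.mem_union.1 hk with h | h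
      · exact (Finset.mem_filter.1 h).2.1
      · exact (Finset.mem_filter.1 h).2)
    (fun i => L (v i))
    (by
      intro i
      have := Finset.card_union_le (A i) (B i)
      have := hA i
      have := hD i
      have := hB i
      have := hL' (v i)
      show (A i ∪ B i).card < (L (v i)).card
      omega)
  have hψA : ∀ i k j, k < i → v i ∈ Sv j → v k ∈ Sv j → ψ i ≠ ψ k := fun i k j h1 h2 h3 =>
    hψ2 i k (Finset.mem_union_left _
      (Finset.mem_filter.2 ⟨Finset.mem_univ _, h1, j, h2, h3⟩))
  have hψB : ∀ i j, j < i → v j ∈ Sv i → f j < i → ψ i ≠ ψ (f j) := fun i j h1 h2 h3 =>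
    hψ2 i (f j) (Finset.mem_union_right _ (Finset.mem_filter.2 ⟨Finset.mem_image_of_mem _
      (Finset.mem_filter.2 ⟨Finset.mem_univ _, h1, h2⟩), h3⟩))
  let e := Equiv.ofBijective v hv
  have he : ∀ i, e.symm (v i) = i := fun i => e.symm_apply_apply i
  refine ⟨fun u => ψ (e.symm u), ?_, ?_, ?_⟩
  · intro u
    obtain ⟨i, rfl⟩ := hv.2 u
    simpa [he] using hψ1 i
  · intro u w h
    obtain ⟨i, rfl⟩ := hv.2 u
    obtain ⟨k, rfl⟩ := hv.2 w
    simp only [he]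
    rcases lt_trichotomy i k with hik | rfl | hik
    · exact (hψA k i k hik (hself k) (hback k i hik h.symm)).symm
    · exact absurd h (G.irrefl)
    · exact hψA i k i hik (hself i) (hback i k hik h)
  · intro u hu
    obtain ⟨j, rfl⟩ := hv.2 u
    obtain ⟨w, hw⟩ := hu
    obtain ⟨k0, rfl⟩ := hv.2 w
    obtain ⟨hf1, hf2⟩ := hf j ⟨k0, hw⟩
    refine ⟨ψ (f j), Set.ncard_eq_one.2 ⟨v (f j), ?_⟩⟩
    ext x
    obtain ⟨i, rfl⟩ := hv.2 x
    simp only [he, Set.mem_setOf_eq, Set.mem_singleton_iff]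
    constructor
    · rintro ⟨h1, h2⟩
      by_contra hne
      have hlt : f j < i := lt_of_le_of_ne (hf2 i h1) (fun h => hne (by rw [h]))
      rcases lt_trichotomy i j with hij | rfl | hij
      · exact hψA i (f j) j hlt (hback j i hij h1) (hback j _ (hlt.trans hij) hf1) h2
      · exact G.irrefl h1
      · exact hψB i j hij (hback i j hij h1.symm) hlt h2
    · intro h
      have : i = f j := hinj h
      subst this
      exact ⟨hf1, rfl⟩


end CFPaper
end

section
/- Let w and d be nonnegative integers, let H be a finite simple graph with treewidth at most w, and let Q be a finite simple graph with maximum degree at most d. Then the strong product H ⊠ Q is conflict-free ((w+1)(d²+d+2)−1)-choosable. -/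
open SimpleGraph

universe u v

namespace CFPaper

variable {V : Type u} {W : Type v}

/-- Greedy list coloring along an injective ranking. -/
lemma greedy {V : Type} (r : V → ℕ) (Back : V → Finset V) (L : V → Finset ℕ)
    (h : ∀ v, (Back v).card < (L v).card) :
    ∃ φ : V → ℕ, (∀ v, φ v ∈ L v) ∧ ∀ v, ∀ u ∈ Back v, r u < r v → φ u ≠ φ v := by
  classical
  choose pick hpick using (fun (v : V) (s : Finset ℕ) => (by
    by_cases hs : s.card < (L v).card
    · obtain ⟨c, hc1, hc2⟩ := Finset.exists_mem_notMem_of_card_lt_card hs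
      exact ⟨c, fun _ => ⟨hc1, hc2⟩⟩
    · exact ⟨0, fun h => absurd h hs⟩ :
      ∃ c : ℕ, s.card < (L v).card → c ∈ L v ∧ c ∉ s))
  let φ : V → ℕ := (measure r).wf.fix (fun v rec =>
    pick v ((Back v).image (fun u => if hu : r u < r v then rec u hu else 0)))
  have hφ : ∀ v, φ v = pick v ((Back v).image (fun u => if r u < r v then φ u else 0)) := by
    intro v
    have := (measure r).wf.fix_eq (C := fun _ => ℕ) (fun v rec =>
      pick v ((Back v).image (fun u => if hu : r u < r v then rec u hu else 0))) v
    simpa [φ] using this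
  have hp : ∀ v, φ v ∈ L v ∧ φ v ∉ (Back v).image (fun u => if r u < r v then φ u else 0) := by
    intro v
    have := hpick v ((Back v).image (fun u => if r u < r v then φ u else 0))
      (lt_of_le_of_lt Finset.card_image_le (h v))
    rwa [← hφ v] at this
  refine ⟨φ, fun v => (hp v).1, fun v u hu huv he => (hp v).2 ?_⟩
  exact Finset.mem_image.mpr ⟨u, hu, by simp [huv, he]⟩

/-- In a tree rooted at `t`, a connected set contains everything between a member `y` and its
top `m`. -/
lemma tree_top {ι : Type} {T : SimpleGraph ι} (hT : T.IsTree) (t : ι) (S : Set ι)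
    (hS : (T.induce S).Connected) (m : ι) (hm : m ∈ S)
    (hmin : ∀ z ∈ S, T.dist m t ≤ T.dist z t) (y : ι) (hy : y ∈ S)
    (P : T.Walk y t) (hP : P.IsPath) :
    m ∈ P.support ∧ ∀ z ∈ P.support, T.dist m t ≤ T.dist z t → z ∈ S := by
  classical
  obtain ⟨p0, hp0⟩ := (hS.preconnected ⟨y, hy⟩ ⟨m, hm⟩).exists_isPath
  let p1 : T.Walk y m := p0.map (SimpleGraph.Embedding.induce S).toHom
  have hp1 : p1.IsPath := SimpleGraph.Walk.map_isPath_of_injective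
    (SimpleGraph.Embedding.induce (G := T) S).injective hp0
  have hp1S : ∀ z ∈ p1.support, z ∈ S := by
    intro z hz
    have hsup : p1.support = p0.support.map (SimpleGraph.Embedding.induce S).toHom :=
      SimpleGraph.Walk.support_map _ _
    rw [hsup] at hz
    obtain ⟨a, _, rfl⟩ := List.mem_map.mp hz
    exact a.2
  obtain ⟨q, hq, hql⟩ := hT.1.exists_path_of_dist m t
  have hqd : ∀ z ∈ q.support, z ≠ m → T.dist z t < T.dist m t := by
    intro z hz hzm
    have h1 : (q.dropUntil z hz).length ≥ T.dist z t := SimpleGraph.dist_le _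
    have h2 : (q.takeUntil z hz).length + (q.dropUntil z hz).length = q.length := by
      rw [← SimpleGraph.Walk.length_append, SimpleGraph.Walk.take_spec]
    have h3 : (q.takeUntil z hz).length ≠ 0 := fun h0 =>
      hzm (SimpleGraph.Walk.eq_of_length_eq_zero h0).symm
    omega
  have hpath : (p1.append q).IsPath := by
    rw [SimpleGraph.Walk.isPath_def, SimpleGraph.Walk.support_append]
    have hqn := hq.support_nodup
    rw [SimpleGraph.Walk.support_eq_cons, List.nodup_cons] at hqn
    refine List.Nodup.append hp1.support_nodup hqn.2 ?_
    intro z hz1 hz2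
    have hzm : z ≠ m := fun h => hqn.1 (h ▸ hz2)
    have := hqd z (List.mem_of_mem_tail hz2) hzm
    have := hmin z (hp1S z hz1)
    omega
  have hPe : P = p1.append q := by
    have := hT.2.path_unique ⟨P, hP⟩ ⟨_, hpath⟩
    exact congrArg Subtype.val this
  subst hPe
  refine ⟨by simp, ?_⟩
  intro z hz hd
  rw [SimpleGraph.Walk.mem_support_append_iff] at hz
  rcases hz with hz | hz
  · exact hp1S z hz
  · by_cases hzm : z = m
    · exact hzm ▸ hm
    · have := hqd z hz hzm
      omega

/-- Elimination order from a tree-decomposition. -/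
lemma elim_order (w : ℕ) {α : Type} [Fintype α] (H : SimpleGraph α)
    (htw : ∃ (ι : Type) (_ : Fintype ι) (T : SimpleGraph ι) (B : ι → Set α),
      IsTreeDecomp H T B ∧ ∀ x : ι, (B x).ncard ≤ w + 1) :
    ∃ (r : α → ℕ) (F : α → α → Prop) (fb : α → Finset α), Function.Injective r ∧
      (∀ a b, F a b → F b a) ∧ (∀ a b, H.Adj a b → F a b) ∧
      (∀ x, (fb x).card ≤ w) ∧ (∀ x u, F u x → r u < r x → u ∈ fb x) ∧
      (∀ x, ∀ a ∈ fb x, ∀ b ∈ fb x, a ≠ b → F a b) := by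
  classical
  obtain ⟨ι, _, T, B, hB, hw⟩ := htw
  obtain ⟨t⟩ := hB.tree.1.nonempty
  have htop : ∀ v : α, ∃ m, v ∈ B m ∧ ∀ z, v ∈ B z → T.dist m t ≤ T.dist z t := by
    intro v
    obtain ⟨⟨x, hx⟩⟩ := (hB.bags_connected v).nonempty
    obtain ⟨m, hm, hm2⟩ := Set.exists_min_image {x | v ∈ B x} (fun z => T.dist z t)
      (Set.toFinite _) ⟨x, hx⟩
    exact ⟨m, hm, hm2⟩
  choose top htop1 htop2 using htop
  let e := Fintype.equivFin α
  let N := Fintype.card α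
  let r : α → ℕ := fun x => (e x : ℕ) + N * T.dist (top x) t
  have hmod : ∀ x, r x % N = e x := fun x => by
    simp only [r, Nat.add_mul_mod_self_left]
    exact Nat.mod_eq_of_lt (e x).2
  have hdiv : ∀ x, r x / N = T.dist (top x) t := fun x => by
    have hN : 0 < N := lt_of_le_of_lt (Nat.zero_le _) (e x).2
    simp only [r]
    rw [Nat.add_mul_div_left _ _ hN, Nat.div_eq_of_lt (e x).2, Nat.zero_add]
  refine ⟨r, fun a b => a ≠ b ∧ ∃ x, a ∈ B x ∧ b ∈ B x,
    fun x => (B (top x)).toFinset.erase x, ?_, ?_, ?_, ?_, ?_, ?_⟩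
  · intro a b hab
    apply e.injective
    apply Fin.ext
    rw [← hmod, ← hmod, hab]
  · rintro a b ⟨h, x, h1, h2⟩
    exact ⟨h.symm, x, h2, h1⟩
  · intro a b h
    exact ⟨h.ne, hB.edge_in_bag h⟩
  · intro x
    have h1 := hw (top x)
    rw [Set.ncard_eq_toFinset_card'] at h1
    rw [Finset.card_erase_of_mem (by simpa using htop1 x)]
    omega
  · rintro x u ⟨hne, y, hu, hx⟩ hr
    have hd : T.dist (top u) t ≤ T.dist (top x) t := by
      rw [← hdiv, ← hdiv]
      exact Nat.div_le_div_right hr.le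
    obtain ⟨P, hP⟩ := (hB.tree.1.preconnected y t).exists_isPath
    have h1 := (tree_top hB.tree t _ (hB.bags_connected x) (top x) (htop1 x) (htop2 x) y hx P hP).1
    have h2 := (tree_top hB.tree t _ (hB.bags_connected u) (top u) (htop1 u) (htop2 u) y hu P hP).2
      _ h1 hd
    simp only [Finset.mem_erase, Set.mem_toFinset]
    exact ⟨hne, h2⟩
  · intro x a ha b hb hab
    simp only [Finset.mem_erase, Set.mem_toFinset] at ha hb
    exact ⟨hab, top x, ha.2, hb.2⟩

theorem stmt16 (w d : ℕ) (α β : Type) [Fintype α] [Fintype β]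
    (H : SimpleGraph α) (Q : SimpleGraph β)
    (htw : ∃ (ι : Type) (_ : Fintype ι) (T : SimpleGraph ι) (B : ι → Set α),
      IsTreeDecomp H T B ∧ ∀ x : ι, (B x).ncard ≤ w + 1)
    (hdeg : ∀ v : β, (Q.neighborSet v).ncard ≤ d) :
    CFChoosable (strongProd H Q) (((w + 1) * (d ^ 2 + d + 2) - 1 : ℕ) : ℝ) := by
  classical
  intro L hL
  obtain ⟨r, F, fb, hinj, hsymm, hHF, hcard, hfb, hcl⟩ := elim_order w H htw
  have hfirst : ∀ u, ∃ f, (∃ x, H.Adj u x) → H.Adj u f ∧ ∀ x, H.Adj u x → r f ≤ r x := by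
    intro u
    by_cases h : ∃ x, H.Adj u x
    · obtain ⟨f, hf, hf2⟩ := Set.exists_min_image {x | H.Adj u x} r (Set.toFinite _) h
      exact ⟨f, fun _ => ⟨hf, hf2⟩⟩
    · exact ⟨u, fun h' => absurd h' h⟩
  choose first hfirst using hfirst
  let Nb : β → Finset β := fun p => (Q.neighborSet p).toFinset
  have hNb : ∀ p q, q ∈ Nb p ↔ Q.Adj p q := fun p q => by simp [Nb]
  have hNc : ∀ p, (Nb p).card ≤ d := fun p => by
    have := hdeg p
    rwa [Set.ncard_eq_toFinset_card'] at this
  let R : β → Finset β := fun p => insert p (Nb p ∪ (Nb p).biUnion Nb)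
  have hRc : ∀ p, (R p).card ≤ d ^ 2 + d + 1 := by
    intro p
    have h1 : ((Nb p).biUnion Nb).card ≤ (Nb p).card * d :=
      Finset.card_biUnion_le_card_mul _ _ _ (fun q _ => hNc q)
    have h2 : (Nb p).card * d ≤ d * d := Nat.mul_le_mul_right _ (hNc p)
    have h3 := Finset.card_union_le (Nb p) ((Nb p).biUnion Nb)
    have h4 := Finset.card_insert_le p (Nb p ∪ (Nb p).biUnion Nb)
    have h5 := hNc p
    simp only [R]
    nlinarith
  have hR : ∀ p q, q ∈ R p ↔ q = p ∨ Q.Adj p q ∨ ∃ s, Q.Adj p s ∧ Q.Adj s q := by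
    intro p q
    simp only [R, Finset.mem_insert, Finset.mem_union, Finset.mem_biUnion, hNb]
  have hRs : ∀ p q, q ∈ R p → p ∈ R q := by
    intro p q h
    rw [hR] at h ⊢
    rcases h with h | h | ⟨s, h1, h2⟩
    · exact Or.inl h.symm
    · exact Or.inr (Or.inl h.symm)
    · exact Or.inr (Or.inr ⟨s, h2.symm, h1.symm⟩)
  let Back : α × β → Finset (α × β) := fun v =>
    ((fb v.1) ×ˢ (R v.2)) ∪ (({v.1} : Finset α) ×ˢ ((R v.2).erase v.2)) ∪
      (fb v.1).image (fun z => (first z, v.2))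
  have hBack : ∀ v, (Back v).card < (L v).card := by
    rintro ⟨x, p⟩
    have h1 : ((w + 1) * (d ^ 2 + d + 2) - 1 : ℕ) ≤ (L (x, p)).card := by exact_mod_cast hL (x, p)
    have h2 : ((fb x) ×ˢ (R p)).card ≤ w * (d ^ 2 + d + 1) := by
      rw [Finset.card_product]
      exact Nat.mul_le_mul (hcard x) (hRc p)
    have h3 : (({x} : Finset α) ×ˢ ((R p).erase p)).card ≤ d ^ 2 + d := by
      rw [Finset.card_product, Finset.card_singleton, one_mul,
        Finset.card_erase_of_mem ((hR p p).2 (Or.inl rfl))]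
      have := hRc p
      omega
    have h4 : ((fb x).image (fun z => (first z, p))).card ≤ w :=
      Finset.card_image_le.trans (hcard x)
    have h5 := Finset.card_union_le (((fb x) ×ˢ (R p)) ∪ (({x} : Finset α) ×ˢ ((R p).erase p)))
      ((fb x).image (fun z => (first z, p)))
    have h6 := Finset.card_union_le ((fb x) ×ˢ (R p)) (({x} : Finset α) ×ˢ ((R p).erase p))
    have h7 : (w + 1) * (d ^ 2 + d + 2) = w * (d ^ 2 + d + 1) + (d ^ 2 + d) + w + 2 := by ring
    simp only [Back]
    omega
  let e := Fintype.equivFin β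
  let M := Fintype.card β
  let rk : α × β → ℕ := fun v => (e v.2 : ℕ) + M * r v.1
  have hrk1 : ∀ x p u q, r u < r x → rk (u, q) < rk (x, p) := by
    intro x p u q h
    have h1 : (e q : ℕ) < M := (e q).2
    have h2 : M * (r u + 1) ≤ M * r x := Nat.mul_le_mul_left _ h
    simp only [rk]
    rw [Nat.mul_add] at h2
    omega
  obtain ⟨φ, hφL, hφ⟩ := greedy rk Back L hBack
  -- main distinctness property
  have hA : ∀ x p u q, r u < r x → F u x → q ∈ R p → φ (u, q) ≠ φ (x, p) := by
    intro x p u q hr hF hq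
    refine hφ _ _ ?_ (hrk1 _ _ _ _ hr)
    simp only [Back, Finset.mem_union, Finset.mem_product]
    exact Or.inl (Or.inl ⟨hfb x u hF hr, hq⟩)
  have hBl : ∀ x p q, e q < e p → q ∈ R p → φ (x, q) ≠ φ (x, p) := by
    intro x p q hr hq
    refine hφ _ _ ?_ ?_
    · simp only [Back, Finset.mem_union, Finset.mem_product, Finset.mem_singleton, Finset.mem_erase]
      exact Or.inl (Or.inr ⟨by trivial, fun h => by simp [h] at hr, hq⟩)
    · have : (e q : ℕ) < e p := hr
      simp only [rk]
      omega
  have hD : ∀ x p u q, (x, p) ≠ (u, q) → (x = u ∨ F x u) → q ∈ R p → φ (x, p) ≠ φ (u, q) := by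
    intro x p u q hne hF hq
    by_cases hxu : x = u
    · subst hxu
      have hpq : e p ≠ e q := fun h => hne (by rw [e.injective h])
      rcases lt_or_gt_of_ne hpq with h | h
      · exact hBl x q p h (hRs _ _ hq)
      · exact (hBl x p q h hq).symm
    · have hF' := hF.resolve_left hxu
      rcases lt_or_gt_of_ne (fun h => hxu (hinj h)) with h | h
      · exact hA u q x p h hF' (hRs _ _ hq)
      · exact (hA x p u q h (hsymm _ _ hF') hq).symm
  have hadj : ∀ x p u q, (strongProd H Q).Adj (x, p) (u, q) ↔
      ((x, p) ≠ (u, q) ∧ (x = u ∨ H.Adj x u) ∧ (p = q ∨ Q.Adj p q)) := by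
    intro x p u q
    simp only [strongProd, SimpleGraph.fromRel_adj, H.adj_comm u x, Q.adj_comm q p,
      @eq_comm _ q p, @eq_comm _ u x, ne_eq, Prod.mk.injEq]
    tauto
  refine ⟨φ, hφL, ?_, ?_⟩
  · rintro ⟨x, p⟩ ⟨u, q⟩ h
    rw [hadj] at h
    refine hD _ _ _ _ h.1 (h.2.1.imp_right (hHF _ _)) ?_
    rw [hR]
    rcases h.2.2 with h | h
    · exact Or.inl h.symm
    · exact Or.inr (Or.inl h)
  · rintro ⟨u, q⟩ ⟨⟨x0, p0⟩, hx0⟩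
    rw [SimpleGraph.mem_neighborSet, hadj] at hx0
    by_cases hq : ∃ s, Q.Adj q s
    · obtain ⟨s, hs⟩ := hq
      refine ⟨φ (u, s), Set.ncard_eq_one.mpr ⟨(u, s), ?_⟩⟩
      ext ⟨x, p⟩
      simp only [Set.mem_setOf_eq, Set.mem_singleton_iff]
      constructor
      · rintro ⟨h, hc⟩
        by_contra hne
        rw [hadj] at h
        refine hD _ _ _ _ hne (h.2.1.imp Eq.symm (fun h => hHF _ _ h.symm)) ?_ hc
        rw [hR]
        rcases h.2.2 with h | h
        · exact Or.inr (Or.inl (h ▸ hs))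
        · exact Or.inr (Or.inr ⟨q, h.symm, hs⟩)
      · intro h
        rw [h, hadj]
        exact ⟨⟨fun h => hs.ne (Prod.ext_iff.mp h).2, Or.inl rfl, Or.inr hs⟩, rfl⟩
    · have hq' : ∀ s, ¬ Q.Adj q s := fun s hs => hq ⟨s, hs⟩
      have hx0' : H.Adj u x0 := by
        rcases hx0 with ⟨h1, h2, h3⟩
        have h3 := h3.resolve_right (hq' _)
        exact h2.resolve_left (fun h => h1 (by rw [h, h3]))
      obtain ⟨hf1, hf2⟩ := hfirst u ⟨x0, hx0'⟩
      refine ⟨φ (first u, q), Set.ncard_eq_one.mpr ⟨(first u, q), ?_⟩⟩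
      ext ⟨x, p⟩
      simp only [Set.mem_setOf_eq, Set.mem_singleton_iff]
      constructor
      · rintro ⟨h, hc⟩
        by_contra hne
        rw [hadj] at h
        have hp : q = p := h.2.2.resolve_right (hq' _)
        subst hp
        have hxa : H.Adj u x := h.2.1.resolve_left (fun h' => h.1 (by rw [h']))
        have hxf : x ≠ first u := fun h => hne (by rw [h])
        have hlt : r (first u) < r x :=
          lt_of_le_of_ne (hf2 x hxa) (fun h => hxf (hinj h).symm)
        have hux : r u ≠ r x := fun h => hxa.ne (hinj h)
        rcases lt_or_gt_of_ne hux with hr | hr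
        · refine hφ (x, q) (first u, q) ?_ (hrk1 _ _ _ _ hlt) hc.symm
          simp only [Back, Finset.mem_union, Finset.mem_image]
          exact Or.inr ⟨u, hfb x u (hHF _ _ hxa) hr, rfl⟩
        · have h1 := hfb u x (hHF _ _ hxa.symm) hr
          have h2 := hfb u (first u) (hHF _ _ hf1.symm) (hlt.trans hr)
          exact hD _ _ _ _ hne (Or.inr (hcl u _ h1 _ h2 hxf)) ((hR _ _).2 (Or.inl rfl)) hc
      · intro h
        rw [h, hadj]
        exact ⟨⟨fun h => hf1.ne (Prod.ext_iff.mp h).1, Or.inr hf1, Or.inl rfl⟩, rfl⟩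

end CFPaper
end

section
/- For every positive integer k there exists an integer c such that every finite simple graph G that is not conflict-free c-choosable contains a subgraph that is a 1-subdivision of a graph with average degree at least k, and contains a subgraph that is a 3-subdivision of a graph with chromatic number at least k. -/
open SimpleGraph

universe u v

namespace CFPaper

variable {V : Type u} {W : Type v}

section Helpers

open scoped Classical

/-- `G` contains a 1-subdivision of `H`, in terms of branch vertices and middle vertices. -/
def Has1Sub {α : Type*} {V : Type*} (H : SimpleGraph α) (G : SimpleGraph V) : Prop :=
  ∃ (f : α → V) (m : Sym2 α → V), Function.Injective f ∧ Set.InjOn m H.edgeSet ∧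
    (∀ e ∈ H.edgeSet, ∀ x, f x ≠ m e) ∧ ∀ x y, H.Adj x y → G.Adj (f x) (m s(x, y))

theorem fromRel_hom {α V : Type*} (r : α → α → Prop) (G : SimpleGraph V) (f : α → V)
    (h : ∀ a b, r a b → G.Adj (f a) (f b)) :
    ∃ F : SimpleGraph.fromRel r →g G, ∀ a, F a = f a := by
  refine ⟨⟨f, ?_⟩, fun a => rfl⟩
  intro a b hab
  rw [SimpleGraph.fromRel_adj] at hab
  rcases hab.2 with h1 | h1
  · exact h _ _ h1
  · exact (h _ _ h1).symm

theorem exists_orient {α : Type*} (H : SimpleGraph α) :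
    ∃ σ : H.edgeSet → α × α, ValidOrientation H σ :=
  ⟨fun e => Quot.out e.1, fun e => Quot.out_eq e.1⟩

theorem orient_adj {α : Type*} {H : SimpleGraph α} {σ : H.edgeSet → α × α}
    (h : ValidOrientation H σ) (e : H.edgeSet) : H.Adj (σ e).1 (σ e).2 := by
  rw [← SimpleGraph.mem_edgeSet, h e]
  exact e.2

theorem Has1Sub.toHom {α V : Type*} {H : SimpleGraph α} {G : SimpleGraph V}
    (h : Has1Sub H G) : ∃ σ : H.edgeSet → α × α, ValidOrientation H σ ∧
      ∃ f : subdivGraph H σ (fun _ => 1) →g G, Function.Injective f := by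
  obtain ⟨f, m, hf, hm, hfm, ha⟩ := h
  obtain ⟨σ, hσ⟩ := exists_orient H
  refine ⟨σ, hσ, ?_⟩
  obtain ⟨F, hF⟩ := fromRel_hom (fun (a b : α ⊕ (Σ _ : H.edgeSet, Fin 1)) =>
    (∃ (x y : α) (h : H.Adj x y),
        a = Sum.inl x ∧ b = Sum.inl y ∧ (fun _ : H.edgeSet => 1) ⟨s(x, y), H.mem_edgeSet.mpr h⟩ = 0) ∨
    (∃ (x : α) (p : Σ _ : H.edgeSet, Fin 1), a = Sum.inl x ∧ b = Sum.inr p ∧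
        ((x = (σ p.1).1 ∧ (p.2 : ℕ) = 0) ∨ (x = (σ p.1).2 ∧ (p.2 : ℕ) = 1 - 1))) ∨
    (∃ p q : Σ _ : H.edgeSet, Fin 1, a = Sum.inr p ∧ b = Sum.inr q ∧ p.1 = q.1 ∧
        (p.2 : ℕ) + 1 = (q.2 : ℕ))) G
    (Sum.elim f (fun p => m p.1)) (by
      rintro a b (⟨x, y, h, rfl, rfl, h0⟩ | ⟨x, p, rfl, rfl, h0⟩ | ⟨p, q, rfl, rfl, h0, h1⟩)
      · simp at h0
      · simp only [Sum.elim_inl, Sum.elim_inr]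
        have hadj := orient_adj hσ p.1
        rcases h0 with ⟨rfl, -⟩ | ⟨rfl, -⟩
        · rw [← hσ p.1]; exact ha _ _ hadj
        · rw [← hσ p.1, Sym2.eq_swap]; exact ha _ _ hadj.symm
      · omega)
  refine ⟨F, ?_⟩
  rintro (x | ⟨e, i⟩) (y | ⟨e', j⟩) hxy
  · have := (hF _).symm.trans (hxy.trans (hF _))
    exact congrArg _ (hf this)
  · have := (hF _).symm.trans (hxy.trans (hF _))
    exact absurd this (hfm _ e'.2 _)
  · have := (hF _).symm.trans (hxy.trans (hF _))
    exact absurd this.symm (hfm _ e.2 _)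
  · have := (hF _).symm.trans (hxy.trans (hF _))
    have he : e = e' := Subtype.ext (hm e.2 e'.2 this)
    subst he
    have : i = j := Subsingleton.elim _ _
    subst this
    rfl

theorem Has1Sub.comp {α β V : Type*} {H1 : SimpleGraph α} {H2 : SimpleGraph β}
    {G : SimpleGraph V}
    (h1 : Has1Sub H1 H2) (h2 : Has1Sub H2 G) :
    ∃ σ : H1.edgeSet → α × α, ValidOrientation H1 σ ∧
      ∃ f : subdivGraph H1 σ (fun _ => 3) →g G, Function.Injective f := by
  obtain ⟨f, m, hf, hm, hfm, ha⟩ := h1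
  obtain ⟨f', m', hf', hm', hfm', ha'⟩ := h2
  obtain ⟨σ, hσ⟩ := exists_orient H1
  refine ⟨σ, hσ, ?_⟩
  have hA1 : ∀ e : H1.edgeSet, H2.Adj (f (σ e).1) (m e) := by
    intro e
    have := ha _ _ (orient_adj hσ e)
    rwa [hσ e] at this
  have hA2 : ∀ e : H1.edgeSet, H2.Adj (f (σ e).2) (m e) := by
    intro e
    have := ha _ _ (orient_adj hσ e).symm
    rwa [Sym2.eq_swap, hσ e] at this
  let g : (Σ _ : H1.edgeSet, Fin 3) → V := fun p =>
    if (p.2 : ℕ) = 0 then m' s(f (σ p.1).1, m p.1)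
    else if (p.2 : ℕ) = 1 then f' (m p.1) else m' s(f (σ p.1).2, m p.1)
  have g0 : ∀ (e : H1.edgeSet) , g ⟨e, 0⟩ = m' s(f (σ e).1, m e) := fun e => by simp [g]
  have g1 : ∀ (e : H1.edgeSet) , g ⟨e, 1⟩ = f' (m e) := fun e => by simp [g]
  have g2 : ∀ (e : H1.edgeSet) , g ⟨e, 2⟩ = m' s(f (σ e).2, m e) := fun e => by simp [g]
  obtain ⟨F, hF⟩ := fromRel_hom (fun (a b : α ⊕ (Σ _ : H1.edgeSet, Fin 3)) =>
    (∃ (x y : α) (h : H1.Adj x y),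
        a = Sum.inl x ∧ b = Sum.inl y ∧ (fun _ : H1.edgeSet => 3) ⟨s(x, y), H1.mem_edgeSet.mpr h⟩ = 0) ∨
    (∃ (x : α) (p : Σ _ : H1.edgeSet, Fin 3), a = Sum.inl x ∧ b = Sum.inr p ∧
        ((x = (σ p.1).1 ∧ (p.2 : ℕ) = 0) ∨ (x = (σ p.1).2 ∧ (p.2 : ℕ) = 3 - 1))) ∨
    (∃ p q : Σ _ : H1.edgeSet, Fin 3, a = Sum.inr p ∧ b = Sum.inr q ∧ p.1 = q.1 ∧
        (p.2 : ℕ) + 1 = (q.2 : ℕ))) G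
    (Sum.elim (fun x => f' (f x)) g) (by
      rintro a b (⟨x, y, h, rfl, rfl, h0⟩ | ⟨x, ⟨e, i⟩, rfl, rfl, h0⟩ |
        ⟨⟨e, i⟩, ⟨e', j⟩, rfl, rfl, h0, h1⟩)
      · simp at h0
      · simp only [Sum.elim_inl, Sum.elim_inr]
        rcases h0 with ⟨rfl, h0⟩ | ⟨rfl, h0⟩
        · have : i = 0 := Fin.ext h0
          subst this
          rw [g0]; exact ha' _ _ (hA1 e)
        · have : i = 2 := Fin.ext h0
          subst this
          rw [g2]; exact ha' _ _ (hA2 e)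
      · simp only [Sum.elim_inr]
        dsimp only at h0 h1
        subst h0
        have hj := j.2
        have : (i = 0 ∧ j = 1) ∨ (i = 1 ∧ j = 2) := by
          simp only [Fin.ext_iff, Fin.val_zero, Fin.val_one, Fin.val_two]; omega
        rcases this with ⟨rfl, rfl⟩ | ⟨rfl, rfl⟩
        · rw [g0, g1, Sym2.eq_swap]; exact (ha' _ _ (hA1 e).symm).symm
        · rw [g2, g1, Sym2.eq_swap]; exact (ha' _ _ (hA2 e).symm))
  refine ⟨F, ?_⟩
  have hB1 : ∀ e : H1.edgeSet, s(f (σ e).1, m e) ∈ H2.edgeSet := hA1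
  have hB2 : ∀ e : H1.edgeSet, s(f (σ e).2, m e) ∈ H2.edgeSet := hA2
  have key : ∀ (x y : α) (e e' : H1.edgeSet), s(f x, m e) ∈ H2.edgeSet →
      s(f y, m e') ∈ H2.edgeSet → m' s(f x, m e) = m' s(f y, m e') → x = y ∧ e = e' := by
    intro x y e e' h h' heq
    have := hm' h h' heq
    rw [Sym2.eq_iff] at this
    rcases this with ⟨h1, h2⟩ | ⟨h1, h2⟩
    · exact ⟨hf h1, Subtype.ext (hm e.2 e'.2 h2)⟩
    · exact absurd h1 (hfm _ e'.2 _)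
  have hne : ∀ e : H1.edgeSet, (σ e).1 ≠ (σ e).2 := fun e => (orient_adj hσ e).ne
  have hgx : ∀ (x : β) (e : H1.edgeSet) (i : Fin 3), f' x = g ⟨e, i⟩ → x = m e ∧ i = 1 := by
    intro x e i h
    have : i = 0 ∨ i = 1 ∨ i = 2 := by fin_cases i <;> simp
    rcases this with rfl | rfl | rfl
    · rw [g0] at h; exact absurd h (hfm' _ (hB1 e) _)
    · rw [g1] at h; exact ⟨hf' h, rfl⟩
    · rw [g2] at h; exact absurd h (hfm' _ (hB2 e) _)
  have hgg : Function.Injective g := by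
    rintro ⟨e, i⟩ ⟨e', j⟩ h
    have hi : i = 0 ∨ i = 1 ∨ i = 2 := by fin_cases i <;> simp
    have hj : j = 0 ∨ j = 1 ∨ j = 2 := by fin_cases j <;> simp
    rcases hi with rfl | rfl | rfl
    · rcases hj with rfl | rfl | rfl
      · rw [g0, g0] at h
        rw [(key _ _ _ _ (hB1 _) (hB1 _) h).2]
      · rw [g1] at h
        simpa using (hgx _ _ _ h.symm).2
      · rw [g0, g2] at h
        obtain ⟨h1, h2⟩ := key _ _ _ _ (hB1 _) (hB2 _) h
        subst h2
        exact absurd h1 (hne _)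
    · rw [g1] at h
      obtain ⟨h1, h2⟩ := hgx _ _ _ h
      subst h2
      rw [Subtype.ext (hm e.2 e'.2 h1)]
    · rcases hj with rfl | rfl | rfl
      · rw [g0, g2] at h
        obtain ⟨h1, h2⟩ := key _ _ _ _ (hB2 _) (hB1 _) h
        subst h2
        exact absurd h1.symm (hne _)
      · rw [g1] at h
        simpa using (hgx _ _ _ h.symm).2
      · rw [g2, g2] at h
        rw [(key _ _ _ _ (hB2 _) (hB2 _) h).2]
  rintro (x | ⟨e, i⟩) (y | ⟨e', j⟩) hxy
  · have := (hF _).symm.trans (hxy.trans (hF _))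
    exact congrArg _ (hf (hf' this))
  · have := (hF _).symm.trans (hxy.trans (hF _))
    exact absurd (hgx _ _ _ this).1 (hfm _ e'.2 _)
  · have := (hF _).symm.trans (hxy.trans (hF _))
    exact absurd (hgx _ _ _ this.symm).1 (hfm _ e.2 _)
  · have := (hF _).symm.trans (hxy.trans (hF _))
    exact congrArg _ (hgg this)

theorem lemB {V : Type*} (G : SimpleGraph V) (d N : ℕ) (hd : 1 ≤ d)
    (S T : Finset V) (hTS : T ⊆ S) (hS : S.Nonempty) (h2 : S.card ≤ 2 * T.card)
    (hdeg : ∀ v ∈ T, d + 8 * (8 * d * (N + 1)) ≤ (S.filter (G.Adj v)).card) :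
    ∃ A B : Finset V, Disjoint A B ∧ A.Nonempty ∧ N * A.card ≤ B.card ∧
      ∀ b ∈ B, d ≤ (A.filter (G.Adj b)).card := by
  obtain ⟨C, hC⟩ : ∃ C, C = 8 * d * (N + 1) := ⟨_, rfl⟩
  rw [← hC] at hdeg
  have hCpos : 0 < C := by rw [hC]; positivity
  obtain ⟨A, hA, hmax⟩ := Finset.exists_max_image S.powerset
    (fun A => (∑ v ∈ T, ((min d (A.filter (G.Adj v)).card : ℕ) : ℤ)) - C * (A.card : ℤ))
    ⟨∅, by simp⟩
  rw [Finset.mem_powerset] at hA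
  let U := T.filter (fun v => (A.filter (G.Adj v)).card < d)
  have hA1 : 8 * (N + 1) * A.card ≤ T.card := by
    have h0 := hmax ∅ (by simp)
    simp at h0
    have h3 : (∑ v ∈ T, (min d (A.filter (G.Adj v)).card)) ≤ T.card * d := by
      rw [← smul_eq_mul]
      exact Finset.sum_le_card_nsmul _ _ _ (fun x _ => min_le_left _ _)
    have h4 : C * A.card ≤ T.card * d := by
      zify at h3 ⊢
      linarith
    rw [hC] at h4
    have : d * (8 * (N + 1) * A.card) ≤ d * T.card := by nlinarith
    exact Nat.le_of_mul_le_mul_left this hd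
  have hU1 : ∀ x ∈ S \ A, (U.filter (G.Adj x)).card ≤ C := by
    intro x hx
    rw [Finset.mem_sdiff] at hx
    have h0 := hmax (insert x A) (by
      rw [Finset.mem_powerset]; exact Finset.insert_subset hx.1 hA)
    rw [Finset.card_insert_of_notMem hx.2] at h0
    have h3 : (∑ v ∈ T, (min d (A.filter (G.Adj v)).card)) + (U.filter (G.Adj x)).card ≤
        ∑ v ∈ T, (min d ((insert x A).filter (G.Adj v)).card) := by
      have : U.filter (G.Adj x) =
          T.filter (fun v => (A.filter (G.Adj v)).card < d ∧ G.Adj x v) := by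
        ext v; simp [U, and_assoc]
      rw [this, Finset.card_filter, ← Finset.sum_add_distrib]
      apply Finset.sum_le_sum
      intro v hv
      rw [Finset.filter_insert]
      by_cases hvx : G.Adj v x
      · rw [if_pos hvx, Finset.card_insert_of_notMem (by simp [hx.2])]
        split_ifs <;> omega
      · have : ¬ G.Adj x v := fun h => hvx h.symm
        simp [hvx, this]
    push_cast at h0
    zify at h3 ⊢
    linarith
  have hU2 : ∀ u ∈ U, 8 * C ≤ ((S \ A).filter (G.Adj u)).card := by
    intro u hu
    rw [Finset.mem_filter] at hu
    have h1 := hdeg u hu.1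
    have h3 : S.filter (G.Adj u) ⊆ (S \ A).filter (G.Adj u) ∪ A.filter (G.Adj u) := by
      intro x; simp only [Finset.mem_filter, Finset.mem_union, Finset.mem_sdiff]; tauto
    have h4 := (Finset.card_le_card h3).trans (Finset.card_union_le _ _)
    omega
  have hU3 : 8 * U.card ≤ S.card := by
    have e1 : ∑ u ∈ U, ((S \ A).filter (G.Adj u)).card =
        ∑ x ∈ S \ A, (U.filter (G.Adj x)).card := by
      simp only [Finset.card_filter]
      rw [Finset.sum_comm]
      simp only [G.adj_comm]
    have e2 : U.card * (8 * C) ≤ ∑ u ∈ U, ((S \ A).filter (G.Adj u)).card := by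
      rw [← smul_eq_mul]; exact Finset.card_nsmul_le_sum _ _ _ hU2
    have e3 : ∑ x ∈ S \ A, (U.filter (G.Adj x)).card ≤ (S \ A).card * C := by
      rw [← smul_eq_mul]; exact Finset.sum_le_card_nsmul _ _ _ hU1
    have e4 : (S \ A).card ≤ S.card := Finset.card_le_card Finset.sdiff_subset
    have : C * (8 * U.card) ≤ C * S.card := by nlinarith
    exact Nat.le_of_mul_le_mul_left this hCpos
  have hB : T.card ≤ ((T \ A) \ U).card + A.card + U.card := by
    have : T ⊆ ((T \ A) \ U) ∪ A ∪ U := by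
      intro x; simp only [Finset.mem_union, Finset.mem_sdiff]; tauto
    exact (Finset.card_le_card this).trans
      ((Finset.card_union_le _ _).trans (by gcongr; exact Finset.card_union_le _ _))
  have hTS' := Finset.card_le_card hTS
  have hSpos := hS.card_pos
  have hAN : 8 * (N * A.card) + 8 * A.card ≤ T.card := by
    have : 8 * (N + 1) * A.card = 8 * (N * A.card) + 8 * A.card := by ring
    omega
  have hb : ∀ b ∈ (T \ A) \ U, d ≤ (A.filter (G.Adj b)).card := by
    intro b hb
    simp only [Finset.mem_sdiff, U, Finset.mem_filter, not_and, not_lt] at hb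
    exact hb.2 hb.1.1
  have hBne : ((T \ A) \ U).Nonempty := by
    rw [← Finset.card_pos]; omega
  refine ⟨A, (T \ A) \ U, ?_, ?_, ?_, hb⟩
  · rw [Finset.disjoint_left]
    intro a ha; simp [ha]
  · obtain ⟨b, hb'⟩ := hBne
    have := hb b hb'
    have : 0 < (A.filter (G.Adj b)).card := by omega
    rw [Finset.card_pos] at this
    exact this.mono (Finset.filter_subset _ _)
  · omega

/-- Greedy derandomised choice of pairs. -/
theorem greedy_pairs {X V : Type*} [Fintype X] (m K : ℕ) (hKpos : 0 < K) (B : Finset V)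
    (Nb : V → Finset X) (hK : ∀ b ∈ B, (Nb b).offDiag.card = K) (hm : ∀ b ∈ B, m < (Nb b).card)
    (F : Finset (X → Fin m)) (x0 : X) :
    ∃ p : V → X × X, (∀ b ∈ B, p b ∈ (Nb b).offDiag) ∧
      (F.filter (fun f => ∀ b ∈ B, f (p b).1 ≠ f (p b).2)).card * K ^ B.card ≤
        F.card * (K - 1) ^ B.card := by
  classical
  induction B using Finset.induction_on generalizing F with
  | empty =>
    exact ⟨fun _ => (x0, x0), by simp, by simp⟩
  | insert b B hb ih =>
    have hO : F.card ≤ ∑ o ∈ (Nb b).offDiag, (F.filter (fun f => f o.1 = f o.2)).card := by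
      simp only [Finset.card_filter]
      rw [Finset.sum_comm, Finset.card_eq_sum_ones]
      apply Finset.sum_le_sum
      intro f _
      have hlt : (Finset.univ : Finset (Fin m)).card < (Nb b).card := by
        simpa using hm b (by simp)
      obtain ⟨x, hx, y, hy, hxy, hf⟩ :=
        Finset.exists_ne_map_eq_of_card_lt_of_maps_to hlt (f := f) (by simp [Set.MapsTo])
      have := Finset.single_le_sum (f := fun o : X × X => if f o.1 = f o.2 then 1 else 0)
        (fun _ _ => Nat.zero_le _) (show (x, y) ∈ (Nb b).offDiag by simp [hx, hy, hxy])
      simpa [hf] using this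
    have hne : ((Nb b).offDiag).Nonempty := by
      rw [← Finset.card_pos, hK b (by simp)]; exact hKpos
    obtain ⟨o, ho, hoK⟩ : ∃ o ∈ (Nb b).offDiag,
        F.card ≤ K * (F.filter (fun f => f o.1 = f o.2)).card := by
      by_contra hcon
      push Not at hcon
      have h1 := Finset.sum_lt_sum_of_nonempty hne hcon
      rw [← Finset.mul_sum, Finset.sum_const, hK b (by simp), smul_eq_mul] at h1
      have := lt_of_mul_lt_mul_left h1 (Nat.zero_le _)
      omega
    obtain ⟨p, hp, hcard⟩ := ih (fun b hb => hK b (by simp [hb])) (fun b hb => hm b (by simp [hb]))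
      (F.filter (fun f => f o.1 ≠ f o.2))
    have hpne : ∀ b' ∈ B, b' ≠ b := fun b' h h' => hb (h' ▸ h)
    refine ⟨Function.update p b o, ?_, ?_⟩
    · intro b' hb'
      rw [Finset.mem_insert] at hb'
      rcases hb' with rfl | hb'
      · simpa using ho
      · rw [Function.update_of_ne (hpne _ hb')]; exact hp _ hb'
    · have e : F.filter (fun f => ∀ b' ∈ insert b B, f (Function.update p b o b').1 ≠
          f (Function.update p b o b').2) =
          (F.filter (fun f => f o.1 ≠ f o.2)).filter
            (fun f => ∀ b ∈ B, f (p b).1 ≠ f (p b).2) := by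
        ext f
        simp only [Finset.mem_filter, Finset.forall_mem_insert, Function.update_self, and_assoc]
        refine and_congr_right fun _ => and_congr_right fun _ => ?_
        refine forall₂_congr fun b' hb' => ?_
        rw [Function.update_of_ne (hpne _ hb')]
      rw [e, Finset.card_insert_of_notMem hb, pow_succ, pow_succ]
      have hsplit : (F.filter (fun f => f o.1 = f o.2)).card +
          (F.filter (fun f => f o.1 ≠ f o.2)).card = F.card :=
        Finset.card_filter_add_card_filter_not _
      have hs : (F.filter (fun f => f o.1 ≠ f o.2)).card * K ≤ F.card * (K - 1) := by
        obtain ⟨K', rfl⟩ : ∃ K', K = K' + 1 := ⟨K - 1, by omega⟩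
        simp only [Nat.add_sub_cancel]
        nlinarith
      calc _ = ((F.filter (fun f => f o.1 ≠ f o.2)).filter
            (fun f => ∀ b ∈ B, f (p b).1 ≠ f (p b).2)).card * K ^ B.card * K := by ring
        _ ≤ (F.filter (fun f => f o.1 ≠ f o.2)).card * (K - 1) ^ B.card * K :=
            Nat.mul_le_mul_right _ hcard
        _ = ((F.filter (fun f => f o.1 ≠ f o.2)).card * K) * (K - 1) ^ B.card := by ring
        _ ≤ (F.card * (K - 1)) * (K - 1) ^ B.card := Nat.mul_le_mul_right _ hs
        _ = _ := by ring

theorem lemA (m : ℕ) (hm : 1 ≤ m) :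
    ∃ N : ℕ, ∀ (V : Type) (G : SimpleGraph V) (A B : Finset V), Disjoint A B → A.Nonempty →
      N * A.card ≤ B.card → (∀ b ∈ B, m + 1 ≤ (A.filter (G.Adj b)).card) →
      ∃ H : SimpleGraph A, ¬ H.Colorable m ∧ Has1Sub H G := by
  obtain ⟨K, hK⟩ : ∃ K, K = (m + 1) * (m + 1) - (m + 1) := ⟨_, rfl⟩
  have hK1 : 1 ≤ K := by
    have : K = m * (m + 1) := by
      rw [hK]; apply Nat.sub_eq_of_eq_add; ring
    nlinarith
  obtain ⟨N, hN⟩ : ∃ N : ℕ, m * (K - 1) ^ N < K ^ N := by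
    have h1 : ((K - 1 : ℝ) / K) < 1 := by
      rw [div_lt_one (by positivity)]; linarith
    have h0 : 0 ≤ ((K - 1 : ℝ) / K) := by
      apply div_nonneg _ (by positivity)
      have : (1 : ℝ) ≤ K := by exact_mod_cast hK1
      linarith
    obtain ⟨N, hN⟩ := exists_pow_lt_of_lt_one (show (0 : ℝ) < 1 / m by positivity) h1
    refine ⟨N, ?_⟩
    rw [div_pow, div_lt_div_iff₀ (by positivity) (by positivity)] at hN
    have : ((m * (K - 1) ^ N : ℕ) : ℝ) < ((K ^ N : ℕ) : ℝ) := by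
      push_cast [Nat.cast_sub hK1]
      linarith
    exact_mod_cast this
  refine ⟨N, fun V G A B hAB hA hcard hdeg => ?_⟩
  obtain ⟨B', hB'B, hB'⟩ := Finset.exists_subset_card_eq hcard
  have hex : ∀ b, ∃ s : Finset A, b ∈ B → s.card = m + 1 ∧ ∀ x ∈ s, G.Adj b x := by
    intro b
    by_cases hb : b ∈ B
    · have h1 := hdeg b hb
      have : (A.filter (G.Adj b)).card = (Finset.univ.filter (fun x : A => G.Adj b x)).card := by
        rw [← Finset.card_map (Function.Embedding.subtype _)]
        congr 1
        ext x
        simp [and_comm]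
      rw [this] at h1
      obtain ⟨s, hs, hs'⟩ := Finset.exists_subset_card_eq h1
      exact ⟨s, fun _ => ⟨hs', fun x hx => by simpa using hs hx⟩⟩
    · exact ⟨∅, fun h => absurd h hb⟩
  choose Nb hNb using hex
  obtain ⟨a0, ha0⟩ := hA
  obtain ⟨p, hp, hpc⟩ := greedy_pairs m K hK1 B' Nb
    (fun b hb => by rw [Finset.offDiag_card, (hNb b (hB'B hb)).1, hK])
    (fun b hb => by rw [(hNb b (hB'B hb)).1]; omega) Finset.univ ⟨a0, ha0⟩
  have hp' : ∀ b ∈ B', (p b).1 ≠ (p b).2 ∧ G.Adj b (p b).1 ∧ G.Adj b (p b).2 := by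
    intro b hb
    have h1 := hp b hb
    rw [Finset.mem_offDiag] at h1
    have h2 := (hNb b (hB'B hb)).2
    exact ⟨h1.2.2, h2 _ h1.1, h2 _ h1.2.1⟩
  let H : SimpleGraph A := SimpleGraph.fromEdgeSet {e | ∃ b ∈ B', s((p b).1, (p b).2) = e}
  refine ⟨H, ?_, ?_⟩
  · rintro ⟨C⟩
    have hmem : (fun x => C x) ∈ (Finset.univ.filter
        (fun f : A → Fin m => ∀ b ∈ B', f (p b).1 ≠ f (p b).2)) := by
      simp only [Finset.mem_filter, Finset.mem_univ, true_and]
      intro b hb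
      apply C.valid
      rw [SimpleGraph.fromEdgeSet_adj]
      exact ⟨⟨b, hb, rfl⟩, (hp' b hb).1⟩
    have hpos := Finset.card_pos.mpr ⟨_, hmem⟩
    have h1 : K ^ B'.card ≤ Fintype.card (A → Fin m) * (K - 1) ^ B'.card := by
      refine le_trans ?_ hpc
      exact Nat.le_mul_of_pos_left _ hpos
    rw [hB', Fintype.card_fun, Fintype.card_fin, Fintype.card_coe, pow_mul, pow_mul,
      ← mul_pow] at h1
    have h2 := Nat.pow_lt_pow_left hN (Finset.card_pos.mpr ⟨a0, ha0⟩).ne'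
    omega
  · have hch : ∀ e : Sym2 A, ∃ b : V, e ∈ H.edgeSet → b ∈ B' ∧ s((p b).1, (p b).2) = e := by
      intro e
      by_cases he : e ∈ H.edgeSet
      · rw [SimpleGraph.edgeSet_fromEdgeSet] at he
        obtain ⟨b, hb, hbe⟩ := he.1
        exact ⟨b, fun _ => ⟨hb, hbe⟩⟩
      · exact ⟨a0, fun h => absurd h he⟩
    choose mm hmm using hch
    refine ⟨Subtype.val, mm, Subtype.val_injective, ?_, ?_, ?_⟩
    · intro e he e' he' heq
      rw [← (hmm e he).2, ← (hmm e' he').2, heq]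
    · intro e he x hx
      exact Finset.disjoint_left.mp hAB x.2 (hx ▸ hB'B (hmm e he).1)
    · intro x y hxy
      obtain ⟨h1, h2⟩ := hmm s(x, y) hxy
      have h3 := hp' _ h1
      rw [Sym2.eq_iff] at h2
      rcases h2 with ⟨h2, _⟩ | ⟨_, h2⟩
      · rw [h2] at h3; exact h3.2.1.symm
      · rw [h2] at h3; exact h3.2.2.symm

/-- Large average degree gives a subset inducing large minimum degree. -/
theorem exists_minDeg {α : Type*} [Fintype α] (H : SimpleGraph α) (D : ℕ)
    (h : 2 * D * Fintype.card α < 2 * H.edgeSet.ncard) :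
    ∃ S : Finset α, S.Nonempty ∧ ∀ v ∈ S, D ≤ (S.filter (H.Adj v)).card := by
  obtain ⟨S, -, hmax⟩ := Finset.exists_max_image (Finset.univ : Finset (Finset α))
    (fun S => (∑ v ∈ S, ((S.filter (H.Adj v)).card : ℤ)) - 2 * D * (S.card : ℤ))
    ⟨∅, by simp⟩
  refine ⟨S, ?_, ?_⟩
  · rw [Finset.nonempty_iff_ne_empty]
    rintro rfl
    have h0 := hmax Finset.univ (by simp)
    have h1 := H.sum_degrees_eq_twice_card_edges
    rw [← SimpleGraph.coe_edgeFinset, Set.ncard_coe_finset] at h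
    simp only [← SimpleGraph.card_neighborFinset_eq_degree, SimpleGraph.neighborFinset_eq_filter]
      at h1
    have h2 : (∑ v, ((Finset.univ.filter (H.Adj v)).card : ℤ)) = 2 * (H.edgeFinset.card : ℤ) := by
      exact_mod_cast h1
    simp only [h2, Finset.card_univ] at h0
    simp at h0
    zify at h
    linarith
  · intro v hv
    have h0 := hmax (S.erase v) (by simp)
    rw [← Finset.add_sum_erase S _ hv, ← Finset.card_erase_add_one hv] at h0
    have h1 : ∑ u ∈ S.erase v, ((S.filter (H.Adj u)).card : ℤ) =
        ∑ u ∈ S.erase v, (((S.erase v).filter (H.Adj u)).card : ℤ) +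
          ((S.filter (H.Adj v)).card : ℤ) := by
      have : S.filter (H.Adj v) = (S.erase v).filter (H.Adj v) := by
        ext x; simp only [Finset.mem_filter, Finset.mem_erase]
        constructor
        · rintro ⟨h1, h2⟩; exact ⟨⟨h2.ne', h1⟩, h2⟩
        · rintro ⟨h1, h2⟩; exact ⟨h1.2, h2⟩
      rw [this, Finset.card_filter _ (S.erase v)]
      push_cast
      rw [← Finset.sum_add_distrib]
      apply Finset.sum_congr rfl
      intro u hu
      by_cases huv : H.Adj u v
      · have : S.filter (H.Adj u) = insert v ((S.erase v).filter (H.Adj u)) := by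
          ext x; simp only [Finset.mem_filter, Finset.mem_erase, Finset.mem_insert]
          by_cases hx : x = v
          · subst hx; simp [huv, hv]
          · simp [hx]
        rw [this, Finset.card_insert_of_notMem (by simp)]
        simp [huv.symm]
      · have : S.filter (H.Adj u) = (S.erase v).filter (H.Adj u) := by
          ext x; simp only [Finset.mem_filter, Finset.mem_erase]
          by_cases hx : x = v
          · subst hx; simp [huv]
          · simp [hx]
        rw [this]
        have : ¬ H.Adj v u := fun h => huv h.symm
        simp [this]
    rw [h1] at h0
    push_cast at h0
    zify
    linarith

/-- `G` has no 1-subdivision of a graph with average degree at least `k`. -/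
def NoDense {V : Type} (G : SimpleGraph V) (k : ℕ) : Prop :=
  ∀ (α : Type) [Fintype α] [Nonempty α] (H : SimpleGraph α), Has1Sub H G →
    2 * H.edgeSet.ncard < k * Fintype.card α

/-- `Q` matches pairs in `A` to common neighbours in `B`. -/
def IsMatch {V : Type} (G : SimpleGraph V) (A B : Finset V) (Q : Finset (Sym2 V × V)) : Prop :=
  (∀ q ∈ Q, ¬ q.1.IsDiag ∧ q.2 ∈ B ∧ ∀ x ∈ q.1, x ∈ A ∧ G.Adj q.2 x) ∧
  (∀ q ∈ Q, ∀ q' ∈ Q, q.1 = q'.1 → q = q') ∧ (∀ q ∈ Q, ∀ q' ∈ Q, q.2 = q'.2 → q = q')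

theorem NoDense.match_lt {V : Type} {G : SimpleGraph V} {k : ℕ} (hno : NoDense G k)
    {A B : Finset V} (hAB : Disjoint A B) (hA : A.Nonempty) {Q : Finset (Sym2 V × V)}
    (hQ : IsMatch G A B Q) : 2 * Q.card < k * A.card := by
  obtain ⟨hQ1, hQ2, hQ3⟩ := hQ
  let H : SimpleGraph A := SimpleGraph.fromEdgeSet
    {e | Sym2.map Subtype.val e ∈ Q.image Prod.fst}
  obtain ⟨a0, ha0⟩ := hA
  have : Nonempty A := ⟨⟨a0, ha0⟩⟩
  have hE : (Sym2.map Subtype.val) '' H.edgeSet = (Q.image Prod.fst : Finset (Sym2 V)) := by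
    ext e
    constructor
    · rintro ⟨e', he', rfl⟩
      rw [SimpleGraph.edgeSet_fromEdgeSet] at he'
      exact he'.1
    · intro he
      rw [Finset.mem_coe] at he
      have he0 := he
      rw [Finset.mem_image] at he
      obtain ⟨q, hq, rfl⟩ := he
      obtain ⟨h1, h2, h3⟩ := hQ1 q hq
      generalize q.1 = e at *
      induction e using Sym2.ind with
      | _ x y =>
        refine ⟨s(⟨x, (h3 x (by simp)).1⟩, ⟨y, (h3 y (by simp)).1⟩), ?_, by simp⟩
        rw [SimpleGraph.mem_edgeSet, SimpleGraph.fromEdgeSet_adj]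
        refine ⟨by simpa using he0, ?_⟩
        simpa using h1
  have hcard : H.edgeSet.ncard = Q.card := by
    rw [← Set.ncard_image_of_injective H.edgeSet (Sym2.map.injective Subtype.val_injective), hE,
      Set.ncard_coe_finset, Finset.card_image_of_injOn]
    intro q hq q' hq' h
    exact hQ2 q hq q' hq' h
  have hsub : Has1Sub H G := by
    have hch : ∀ e : Sym2 A, ∃ b : V, e ∈ H.edgeSet → (Sym2.map Subtype.val e, b) ∈ Q := by
      intro e
      by_cases he : e ∈ H.edgeSet
      · rw [SimpleGraph.edgeSet_fromEdgeSet] at he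
        have := he.1
        simp only [Set.mem_ofPred_eq, Finset.mem_image] at this
        obtain ⟨q, hq, hqe⟩ := this
        exact ⟨q.2, fun _ => by rw [← hqe]; exact hq⟩
      · exact ⟨a0, fun h => absurd h he⟩
    choose mm hmm using hch
    refine ⟨Subtype.val, mm, Subtype.val_injective, ?_, ?_, ?_⟩
    · intro e he e' he' heq
      have := hQ3 _ (hmm e he) _ (hmm e' he') heq
      exact Sym2.map.injective Subtype.val_injective (congrArg Prod.fst this)
    · intro e he x hx
      exact Finset.disjoint_left.mp hAB x.2 (hx ▸ (hQ1 _ (hmm e he)).2.1)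
    · intro x y hxy
      exact ((hQ1 _ (hmm s(x, y) hxy)).2.2 x (by simp)).2.symm
  have := hno A H hsub
  rwa [hcard, Fintype.card_coe] at this

theorem exists_maxMatch {V : Type} [Fintype V] (G : SimpleGraph V) (A B : Finset V) :
    ∃ Q, IsMatch G A B Q ∧ ∀ b ∈ B, b ∉ Q.image Prod.snd → ∀ x ∈ A, ∀ y ∈ A, x ≠ y →
      G.Adj b x → G.Adj b y → s(x, y) ∈ Q.image Prod.fst := by
  obtain ⟨Q, hQ, hmax⟩ := Finset.exists_max_image
    (Finset.univ.filter (fun Q => IsMatch G A B Q)) Finset.card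
    ⟨∅, by simp [IsMatch]⟩
  simp only [Finset.mem_filter, Finset.mem_univ, true_and] at hQ hmax
  refine ⟨Q, hQ, ?_⟩
  intro b hb hbQ x hx y hy hxy hbx hby
  by_contra hcon
  have hnot : (s(x, y), b) ∉ Q := fun h => hbQ (Finset.mem_image.mpr ⟨_, h, rfl⟩)
  have h1 : ∀ q ∈ Q, q.1 ≠ s(x, y) := fun q hq h => hcon (Finset.mem_image.mpr ⟨q, hq, h⟩)
  have h2 : ∀ q ∈ Q, q.2 ≠ b := fun q hq h => hbQ (Finset.mem_image.mpr ⟨q, hq, h⟩)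
  have := hmax (insert (s(x, y), b) Q) (by
    obtain ⟨hQ1, hQ2, hQ3⟩ := hQ
    refine ⟨?_, ?_, ?_⟩
    · intro q hq
      rw [Finset.mem_insert] at hq
      rcases hq with rfl | hq
      · refine ⟨by simpa using hxy, hb, ?_⟩
        intro z hz
        rw [Sym2.mem_iff] at hz
        rcases hz with rfl | rfl
        · exact ⟨hx, hbx⟩
        · exact ⟨hy, hby⟩
      · exact hQ1 q hq
    · intro q hq q' hq' h
      rw [Finset.mem_insert] at hq hq'
      rcases hq with rfl | hq <;> rcases hq' with rfl | hq'
      · rfl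
      · exact absurd h.symm (h1 _ hq')
      · exact absurd h (h1 _ hq)
      · exact hQ2 _ hq _ hq' h
    · intro q hq q' hq' h
      rw [Finset.mem_insert] at hq hq'
      rcases hq with rfl | hq <;> rcases hq' with rfl | hq'
      · rfl
      · exact absurd h.symm (h2 _ hq')
      · exact absurd h (h2 _ hq)
      · exact hQ3 _ hq _ hq' h)
  rw [Finset.card_insert_of_notMem hnot] at this
  omega

theorem NoDense.few_high {V : Type} [Fintype V] {G : SimpleGraph V} {k : ℕ} (hno : NoDense G k)
    (S : Finset V) (hS : S.Nonempty) :
    2 * (S.filter (fun v => (k + 1) + 8 * (8 * (k + 1) * (k + 1)) ≤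
      (S.filter (G.Adj v)).card)).card < S.card := by
  by_contra hcon
  push Not at hcon
  obtain ⟨A, B, hAB, hA, hN, hdeg⟩ := lemB G (k + 1) k (by omega) S _ (Finset.filter_subset _ _)
    hS hcon (fun v hv => (Finset.mem_filter.mp hv).2)
  obtain ⟨Q, hQ, hQmax⟩ := exists_maxMatch G A B
  by_cases hall : ∀ b ∈ B, b ∈ Q.image Prod.snd
  · have h1 : B.card ≤ Q.card :=
      (Finset.card_le_card (fun b hb => hall b hb)).trans Finset.card_image_le
    have h2 := hno.match_lt hAB hA hQ
    omega
  · push Not at hall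
    obtain ⟨b, hb, hbQ⟩ := hall
    have hd := hdeg b hb
    set A' := A.filter (G.Adj b) with hA'
    have hA'A : A' ⊆ A := Finset.filter_subset _ _
    have hAB' : Disjoint A' B := Finset.disjoint_of_subset_left hA'A hAB
    have hm : IsMatch G A' B (Q.filter (fun q => ∀ x ∈ q.1, x ∈ A')) := by
      obtain ⟨hQ1, hQ2, hQ3⟩ := hQ
      refine ⟨?_, ?_, ?_⟩
      · intro q hq
        rw [Finset.mem_filter] at hq
        obtain ⟨h1, h2, h3⟩ := hQ1 q hq.1
        exact ⟨h1, h2, fun x hx => ⟨hq.2 x hx, (h3 x hx).2⟩⟩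
      · intro q hq q' hq' h
        exact hQ2 _ (Finset.mem_filter.mp hq).1 _ (Finset.mem_filter.mp hq').1 h
      · intro q hq q' hq' h
        exact hQ3 _ (Finset.mem_filter.mp hq).1 _ (Finset.mem_filter.mp hq').1 h
    have h1 := hno.match_lt hAB' (Finset.card_pos.mp (by omega)) hm
    have h2 : A'.card.choose 2 ≤ (Q.filter (fun q => ∀ x ∈ q.1, x ∈ A')).card := by
      rw [← Sym2.card_image_offDiag]
      refine le_trans (Finset.card_le_card ?_)
        (Finset.card_image_le (f := Prod.fst))
      intro e he
      rw [Finset.mem_image] at he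
      obtain ⟨⟨x, y⟩, hxy, rfl⟩ := he
      rw [Finset.mem_offDiag] at hxy
      obtain ⟨hx, hy, hne⟩ := hxy
      have hx' := Finset.mem_filter.mp hx
      have hy' := Finset.mem_filter.mp hy
      have := hQmax b hb hbQ x hx'.1 y hy'.1 hne hx'.2 hy'.2
      rw [Finset.mem_image] at this ⊢
      obtain ⟨q, hq, hqe⟩ := this
      refine ⟨q, Finset.mem_filter.mpr ⟨hq, ?_⟩, hqe⟩
      intro z hz
      rw [hqe, Sym2.mem_iff] at hz
      rcases hz with rfl | rfl
      · exact hx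
      · exact hy
    have h3 : A'.card * (A'.card - 1) = 2 * A'.card.choose 2 := by
      rw [Nat.choose_two_right, Nat.mul_div_cancel']
      exact (Nat.even_mul_pred_self _).two_dvd
    have h4 : A'.card * k ≤ A'.card * (A'.card - 1) := Nat.mul_le_mul_left _ (by omega)
    have : k * A'.card = A'.card * k := mul_comm _ _
    omega

/-- One elimination step. -/
theorem NoDense.step {V : Type} [Fintype V] {G : SimpleGraph V} {k D : ℕ} (hno : NoDense G k)
    (hD : D = (k + 1) + 8 * (8 * (k + 1) * (k + 1)))
    (S : Finset V) (hS : S.Nonempty) (hout : ∀ w ∉ S, (S.filter (G.Adj w)).card ≤ D) :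
    ∃ v ∈ S, (S.filter (G.Adj v)).card ≤ D ∧
      (S.filter (fun u => u ≠ v ∧ ∃ w, w ∉ S ∧ G.Adj w v ∧ G.Adj w u)).card ≤ k * D ^ 2 := by
  have hfew := hno.few_high S hS
  rw [← hD] at hfew
  set P : V → Finset V :=
    fun v => S.filter (fun u => u ≠ v ∧ ∃ w, w ∉ S ∧ G.Adj w v ∧ G.Adj w u) with hP
  set T := S.filter (fun v => ¬ D ≤ (S.filter (G.Adj v)).card) with hT
  have hTS : S.card ≤ 2 * T.card := by
    have : (S.filter (fun v => D ≤ (S.filter (G.Adj v)).card)).card + T.card = S.card := by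
      rw [hT]
      convert Finset.card_filter_add_card_filter_not (s := S)
        (fun v => D ≤ (S.filter (G.Adj v)).card)
    omega
  by_contra hcon
  push Not at hcon
  have hbig : ∀ v ∈ T, k * D ^ 2 + 1 ≤ (P v).card := by
    intro v hv
    rw [hT, Finset.mem_filter] at hv
    exact hcon v hv.1 (by omega)
  obtain ⟨Q, hQ, hQmax⟩ := exists_maxMatch G S Sᶜ
  have hlt := hno.match_lt disjoint_compl_right hS hQ
  have hsum : ∑ v ∈ S, (P v).card ≤ Q.card * D ^ 2 := by
    rw [← Finset.card_sigma]
    let g : (Σ _ : V, V) → V × V := fun x => (x.1, x.2)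
    have hg : Function.Injective g := by
      rintro ⟨a, b⟩ ⟨c, d⟩ h
      simp only [g, Prod.mk.injEq] at h
      rw [h.1, h.2]
    rw [← Finset.card_image_of_injective _ hg]
    have hsub : (S.sigma P).image g ⊆ Q.biUnion
        (fun q => S.filter (G.Adj q.2) ×ˢ S.filter (G.Adj q.2)) := by
      intro z hz
      rw [Finset.mem_image] at hz
      obtain ⟨⟨v, u⟩, hvu, rfl⟩ := hz
      rw [Finset.mem_sigma] at hvu
      obtain ⟨hv, hu⟩ := hvu
      dsimp only at hv hu
      rw [hP, Finset.mem_filter] at hu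
      obtain ⟨huS, hne, w, hw, hwv, hwu⟩ := hu
      simp only [Finset.mem_biUnion, Finset.mem_product, Finset.mem_filter, g]
      by_cases hwQ : w ∈ Q.image Prod.snd
      · rw [Finset.mem_image] at hwQ
        obtain ⟨q, hq, rfl⟩ := hwQ
        exact ⟨q, hq, ⟨hv, hwv⟩, ⟨huS, hwu⟩⟩
      · have := hQmax w (by simpa using hw) hwQ v hv u huS hne.symm hwv hwu
        rw [Finset.mem_image] at this
        obtain ⟨q, hq, hqe⟩ := this
        have h3 := (hQ.1 q hq).2.2
        rw [hqe] at h3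
        exact ⟨q, hq, h3 v (by simp), h3 u (by simp)⟩
    refine (Finset.card_le_card hsub).trans (Finset.card_biUnion_le_card_mul _ _ _ ?_)
    intro q hq
    have hq2 := (hQ.1 q hq).2.1
    rw [Finset.mem_compl] at hq2
    have := hout _ hq2
    rw [Finset.card_product, sq]
    exact Nat.mul_le_mul this this
  have hsum2 : T.card * (k * D ^ 2 + 1) ≤ ∑ v ∈ S, (P v).card := by
    have hTsub : T ⊆ S := by rw [hT]; exact Finset.filter_subset _ S
    refine le_trans ?_ (Finset.sum_le_sum_of_subset hTsub)
    rw [← smul_eq_mul]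
    exact Finset.card_nsmul_le_sum _ _ _ hbig
  have hSpos := hS.card_pos
  have hTpos : 0 < T.card := by omega
  have h5 : T.card * (k * D ^ 2 + 1) ≤ Q.card * D ^ 2 := hsum2.trans hsum
  have h6 : 2 * Q.card * D ^ 2 ≤ k * S.card * D ^ 2 := Nat.mul_le_mul_right _ hlt.le
  have h7 : k * S.card * D ^ 2 ≤ k * (2 * T.card) * D ^ 2 :=
    Nat.mul_le_mul_right _ (Nat.mul_le_mul_left _ hTS)
  nlinarith

theorem NoDense.order {V : Type} [Fintype V] {G : SimpleGraph V} {k D : ℕ} (hno : NoDense G k)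
    (hD : D = (k + 1) + 8 * (8 * (k + 1) * (k + 1))) (n : ℕ) :
    ∀ (S : Finset V), S.card = n → (∀ w ∉ S, (S.filter (G.Adj w)).card ≤ D) →
    ∃ r : V → ℕ, Set.InjOn r S ∧ (∀ v ∈ S, r v < n) ∧ ∀ v ∈ S,
      (S.filter (fun u => r u < r v ∧ G.Adj v u)).card ≤ D ∧
      (S.filter (fun u => r u < r v ∧ ∃ w, (w ∉ S ∨ r v < r w) ∧ G.Adj w v ∧ G.Adj w u)).card
        ≤ k * D ^ 2 := by
  induction n with
  | zero =>
    intro S hS _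
    rw [Finset.card_eq_zero] at hS
    subst hS
    exact ⟨fun _ => 0, by simp, by simp, by simp⟩
  | succ n ih =>
    intro S hS hout
    obtain ⟨v, hv, hv1, hv2⟩ := hno.step hD S (Finset.card_pos.mp (by omega)) hout
    obtain ⟨r, hr1, hr2, hr3⟩ := ih (S.erase v) (by rw [Finset.card_erase_of_mem hv, hS]; simp) (by
      intro w hw
      by_cases hwv : w = v
      · subst hwv
        exact (Finset.card_le_card (Finset.filter_subset_filter _ (Finset.erase_subset _ _))).trans
          hv1
      · have : w ∉ S := fun h => hw (Finset.mem_erase.mpr ⟨hwv, h⟩)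
        exact (Finset.card_le_card (Finset.filter_subset_filter _ (Finset.erase_subset _ _))).trans
          (hout w this))
    let r' := Function.update r v n
    have hr'v : r' v = n := by simp [r']
    have hr' : ∀ u, u ≠ v → r' u = r u := fun u hu => by simp [r', hu]
    have hlt : ∀ u ∈ S, u ≠ v → r' u < n := fun u hu huv => by
      rw [hr' u huv]; exact hr2 u (Finset.mem_erase.mpr ⟨huv, hu⟩)
    refine ⟨r', ?_, ?_, ?_⟩
    · intro a ha b hb hab
      rw [Finset.mem_coe] at ha hb
      by_cases hav : a = v <;> by_cases hbv : b = v
      · rw [hav, hbv]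
      · have := hlt b hb hbv
        rw [hav, hr'v] at hab; omega
      · have := hlt a ha hav
        rw [hbv, hr'v] at hab; omega
      · rw [hr' a hav, hr' b hbv] at hab
        exact hr1 (by simp [ha, hav]) (by simp [hb, hbv]) hab
    · intro a ha
      by_cases hav : a = v
      · rw [hav, hr'v]; omega
      · have := hlt a ha hav; omega
    · intro a ha
      by_cases hav : a = v
      · subst hav
        refine ⟨le_trans (Finset.card_le_card ?_) hv1, le_trans (Finset.card_le_card ?_) hv2⟩
        · intro u
          simp only [Finset.mem_filter]
          tauto
        · intro u
          simp only [Finset.mem_filter]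
          rintro ⟨hu, hu1, w, hw, hwa, hwu⟩
          refine ⟨hu, ?_, w, ?_, hwa, hwu⟩
          · rintro rfl; omega
          · rcases hw with hw | hw
            · exact hw
            · intro hwS
              have := hlt w hwS hwa.ne
              omega
      · obtain ⟨h1, h2⟩ := hr3 a (Finset.mem_erase.mpr ⟨hav, ha⟩)
        have hane := hlt a ha hav
        refine ⟨le_trans (Finset.card_le_card ?_) h1, le_trans (Finset.card_le_card ?_) h2⟩
        · intro u
          simp only [Finset.mem_filter, Finset.mem_erase]
          rintro ⟨hu, hu1, hu2⟩
          have huv : u ≠ v := by rintro rfl; omega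
          rw [hr' u huv, hr' a hav] at hu1
          exact ⟨⟨huv, hu⟩, hu1, hu2⟩
        · intro u
          simp only [Finset.mem_filter, Finset.mem_erase]
          rintro ⟨hu, hu1, w, hw, hwa, hwu⟩
          have huv : u ≠ v := by rintro rfl; omega
          rw [hr' u huv, hr' a hav] at hu1
          refine ⟨⟨huv, hu⟩, hu1, w, ?_, hwa, hwu⟩
          by_cases hwv : w = v
          · left; simp [hwv]
          · rw [hr' w hwv, hr' a hav] at hw
            rcases hw with hw | hw
            · left; simp [hw]
            · right; exact hw

theorem greedy_color {V : Type} [Fintype V] (r : V → ℕ) (F : V → Finset V) (L : V → Finset ℕ)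
    (hF : ∀ v, ∀ u ∈ F v, r u < r v) (hL : ∀ v, (F v).card < (L v).card) :
    ∃ φ : V → ℕ, (∀ v, φ v ∈ L v) ∧ ∀ v, ∀ u ∈ F v, φ u ≠ φ v := by
  have key : ∀ n, ∃ φ : V → ℕ, ∀ v, r v < n → φ v ∈ L v ∧ ∀ u ∈ F v, φ u ≠ φ v := by
    intro n
    induction n with
    | zero => exact ⟨fun _ => 0, by simp⟩
    | succ n ih =>
      obtain ⟨φ, hφ⟩ := ih
      have hex : ∀ v, ∃ c ∈ L v, c ∉ (F v).image φ := fun v =>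
        Finset.exists_mem_notMem_of_card_lt_card (Finset.card_image_le.trans_lt (hL v))
      choose c hc1 hc2 using hex
      refine ⟨fun v => if r v < n then φ v else c v, ?_⟩
      intro v hv
      by_cases hvn : r v < n
      · simp only [hvn, if_true]
        refine ⟨(hφ v hvn).1, fun u hu => ?_⟩
        rw [if_pos ((hF v u hu).trans hvn)]
        exact (hφ v hvn).2 u hu
      · simp only [hvn, if_false]
        refine ⟨hc1 v, fun u hu => ?_⟩
        have := hF v u hu
        rw [if_pos (by omega)]
        intro h
        exact hc2 v (Finset.mem_image.mpr ⟨u, hu, h⟩)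
  obtain ⟨φ, hφ⟩ := key ((Finset.univ.sup r) + 1)
  have hb : ∀ v, r v < Finset.univ.sup r + 1 := fun v =>
    Nat.lt_succ_of_le (Finset.le_sup (Finset.mem_univ v))
  exact ⟨φ, fun v => (hφ v (hb v)).1, fun v => (hφ v (hb v)).2⟩

theorem NoDense.choosable {V : Type} [Fintype V] {G : SimpleGraph V} {k D : ℕ}
    (hno : NoDense G k) (hD : D = (k + 1) + 8 * (8 * (k + 1) * (k + 1))) :
    CFChoosable G (((2 * D + k * D ^ 2 + 1 : ℕ) : ℤ) : ℝ) := by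
  intro L hL
  obtain ⟨r, hr1, -, hr3⟩ := hno.order hD _ Finset.univ rfl (by simp)
  have hinj : Function.Injective r := fun a b h => hr1 (by simp) (by simp) h
  have hπ : ∀ v, ∃ x, (G.neighborSet v).Nonempty → G.Adj v x ∧ ∀ u, G.Adj v u → r x ≤ r u := by
    intro v
    by_cases h : (G.neighborSet v).Nonempty
    · obtain ⟨y, hy⟩ := h
      obtain ⟨x, hx, hmin⟩ := Finset.exists_min_image (Finset.univ.filter (G.Adj v)) r
        ⟨y, by simpa using hy⟩
      refine ⟨x, fun _ => ⟨by simpa using hx, fun u hu => hmin u (by simpa using hu)⟩⟩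
    · exact ⟨v, fun h' => absurd h' h⟩
  choose π hπ using hπ
  let F1 : V → Finset V := fun v => Finset.univ.filter (fun u => r u < r v ∧ G.Adj v u)
  let F2 : V → Finset V := fun v => Finset.univ.filter
    (fun u => r u < r v ∧ ∃ w, (w ∉ (Finset.univ : Finset V) ∨ r v < r w) ∧
      G.Adj w v ∧ G.Adj w u)
  let F3 : V → Finset V := fun v => ((F1 v).image π).filter (fun u => r u < r v)
  obtain ⟨φ, hφ1, hφ2⟩ := greedy_color r (fun v => F1 v ∪ F2 v ∪ F3 v) L (by
      intro v u hu
      simp only [Finset.mem_union, F1, F2, F3, Finset.mem_filter] at hu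
      rcases hu with (hu | hu) | hu
      · exact hu.2.1
      · exact hu.2.1
      · exact hu.2) (by
      intro v
      obtain ⟨h1, h2⟩ := hr3 v (by simp)
      have h3 : (F3 v).card ≤ D :=
        (Finset.card_filter_le _ _).trans (Finset.card_image_le.trans h1)
      have h4 := Finset.card_union_le (F1 v ∪ F2 v) (F3 v)
      have h5 := Finset.card_union_le (F1 v) (F2 v)
      have h6 : 2 * D + k * D ^ 2 + 1 ≤ (L v).card := by exact_mod_cast hL v
      have h1' : (F1 v).card ≤ D := h1
      have h2' : (F2 v).card ≤ k * D ^ 2 := h2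
      omega)
  refine ⟨φ, hφ1, ?_, ?_⟩
  · intro u w huw
    rcases lt_trichotomy (r u) (r w) with h | h | h
    · exact hφ2 w u (by simp [F1, h, huw.symm])
    · exact absurd (hinj h) huw.ne
    · exact (hφ2 u w (by simp [F1, h, huw])).symm
  · intro v hv
    obtain ⟨hx, hmin⟩ := hπ v hv
    refine ⟨φ (π v), ?_⟩
    rw [Set.ncard_eq_one]
    refine ⟨π v, ?_⟩
    ext u
    simp only [Set.mem_ofPred_eq, Set.mem_singleton_iff]
    constructor
    · rintro ⟨hvu, hφu⟩
      by_contra hne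
      have hlt : r (π v) < r u := lt_of_le_of_ne (hmin u hvu) (fun h => hne (hinj h).symm)
      refine hφ2 u (π v) ?_ hφu.symm
      rcases lt_trichotomy (r v) (r u) with h | h | h
      · apply Finset.mem_union_right
        rw [Finset.mem_filter, Finset.mem_image]
        exact ⟨⟨v, by simp [F1, h, hvu.symm], rfl⟩, hlt⟩
      · exact absurd (hinj h) hvu.ne
      · apply Finset.mem_union_left
        apply Finset.mem_union_right
        rw [Finset.mem_filter]
        exact ⟨by simp, hlt, v, Or.inr h, hvu, hx⟩
    · rintro rfl
      exact ⟨hx, rfl⟩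

end Helpers

theorem stmt17 (k : ℕ) (hk : 0 < k) :
    ∃ c : ℤ, ∀ (V : Type) [Fintype V] (G : SimpleGraph V),
      ¬ CFChoosable G (c : ℝ) →
      ((∃ (α : Type) (_ : Fintype α) (H : SimpleGraph α) (σ : H.edgeSet → α × α),
          ValidOrientation H σ ∧
          (k : ℝ) ≤ 2 * (H.edgeSet.ncard : ℝ) / (Fintype.card α : ℝ) ∧
          ∃ f : subdivGraph H σ (fun _ => 1) →g G, Function.Injective f) ∧
       (∃ (α : Type) (_ : Fintype α) (H : SimpleGraph α) (σ : H.edgeSet → α × α),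
          ValidOrientation H σ ∧ (k : ℕ∞) ≤ H.chromaticNumber ∧
          ∃ f : subdivGraph H σ (fun _ => 3) →g G, Function.Injective f)) := by
  obtain ⟨N, hN⟩ := lemA k hk
  obtain ⟨D0, hD0⟩ : ∃ D0, D0 = (k + 1) + 8 * (8 * (k + 1) * (N + 1)) := ⟨_, rfl⟩
  obtain ⟨K, hK⟩ : ∃ K, K = k + 2 * D0 + 1 := ⟨_, rfl⟩
  obtain ⟨D, hD⟩ : ∃ D, D = (K + 1) + 8 * (8 * (K + 1) * (K + 1)) := ⟨_, rfl⟩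
  refine ⟨((2 * D + K * D ^ 2 + 1 : ℕ) : ℤ), ?_⟩
  intro V _ G hG
  have hdense : ¬ NoDense G K := fun h => hG (h.choosable hD)
  unfold NoDense at hdense
  push Not at hdense
  obtain ⟨α, hfin, hne, H, hH, hcard⟩ := hdense
  have hpos : 0 < Fintype.card α := Fintype.card_pos
  constructor
  · obtain ⟨σ, hσ, f, hf⟩ := hH.toHom
    refine ⟨α, hfin, H, σ, hσ, ?_, f, hf⟩
    rw [le_div_iff₀ (by exact_mod_cast hpos)]
    have : k * Fintype.card α ≤ 2 * H.edgeSet.ncard :=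
      (Nat.mul_le_mul_right _ (by omega)).trans hcard
    exact_mod_cast this
  · obtain ⟨S, hS, hdeg⟩ := exists_minDeg H D0 (by
      refine lt_of_lt_of_le ?_ hcard
      exact Nat.mul_lt_mul_of_pos_right (by omega) hpos)
    classical
    obtain ⟨A, B, hAB, hA, hNB, hb⟩ := lemB H (k + 1) N (by omega) S S (Finset.Subset.refl _) hS
      (by omega) (fun v hv => by rw [← hD0]; exact hdeg v hv)
    obtain ⟨H1, hcol, hsub⟩ := hN α H A B hAB hA hNB hb
    obtain ⟨σ, hσ, f, hf⟩ := hsub.comp hH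
    refine ⟨A, inferInstance, H1, σ, hσ, ?_, f, hf⟩
    by_contra hlt
    push Not at hlt
    exact hcol (SimpleGraph.chromaticNumber_le_iff_colorable.mp hlt.le)

end CFPaper
end

section
/- Let k be an integer and let H be a finite simple graph with χ(H) ≥ (k−1)² + 1. If G is an (≤1)-subdivision of H, then there exists an induced subgraph G′ of G such that either χ(G′) ≥ k, or G′ is a 1-subdivision of a graph H′ with χ(H′) ≥ k. -/
open SimpleGraph

universe u v

namespace CFPaper

variable {V : Type u} {W : Type v}

theorem adj_ll (H : SimpleGraph W) (σ : H.edgeSet → W × W) (n : H.edgeSet → ℕ) (x y : W) :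
    (subdivGraph H σ n).Adj (Sum.inl x) (Sum.inl y) ↔
      ∃ h : H.Adj x y, n ⟨s(x, y), H.mem_edgeSet.mpr h⟩ = 0 := by
  unfold subdivGraph
  rw [SimpleGraph.fromRel_adj]
  constructor
  · rintro ⟨-, (⟨a, b, h, ha, hb, hn⟩ | ⟨a, p, -, hb, -⟩ | ⟨p, q, ha, -⟩) |
      (⟨a, b, h, ha, hb, hn⟩ | ⟨a, p, -, hb, -⟩ | ⟨p, q, ha, -⟩)⟩
    · cases ha; cases hb; exact ⟨h, hn⟩
    · cases hb
    · cases ha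
    · cases ha; cases hb
      refine ⟨h.symm, ?_⟩
      rw [← hn]; congr 2; exact Sym2.eq_swap
    · cases hb
    · cases ha
  · rintro ⟨h, hn⟩
    exact ⟨fun e => h.ne (Sum.inl.inj e), Or.inl (Or.inl ⟨x, y, h, rfl, rfl, hn⟩)⟩

theorem adj_lr (H : SimpleGraph W) (σ : H.edgeSet → W × W) (n : H.edgeSet → ℕ)
    (hσ : ValidOrientation H σ) (hn : ∀ e, n e ≤ 1) (x : W) (p : Σ e : H.edgeSet, Fin (n e)) :
    (subdivGraph H σ n).Adj (Sum.inl x) (Sum.inr p) ↔ x ∈ (p.1 : Sym2 W) := by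
  have h0 : (p.2 : ℕ) = 0 := by have := p.2.2; have := hn p.1; omega
  have h1 : (p.2 : ℕ) = n p.1 - 1 := by have := p.2.2; have := hn p.1; omega
  rw [← hσ p.1, Sym2.mem_iff]
  unfold subdivGraph
  rw [SimpleGraph.fromRel_adj]
  constructor
  · rintro ⟨-, (⟨a, b, h, ha, hb, -⟩ | ⟨a, q, ha, hb, h⟩ | ⟨p, q, ha, -⟩) |
      (⟨a, b, h, ha, hb, -⟩ | ⟨a, q, ha, hb, -⟩ | ⟨p, q, ha, hb, -⟩)⟩
    · cases hb
    · cases ha; cases hb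
      exact h.imp And.left And.left
    · cases ha
    · cases ha
    · cases ha
    · cases hb
  · intro h
    exact ⟨Sum.inl_ne_inr, Or.inl (Or.inr (Or.inl ⟨x, p, rfl, rfl,
      h.imp (fun h => ⟨h, h0⟩) (fun h => ⟨h, h1⟩)⟩))⟩

theorem adj_rr (H : SimpleGraph W) (σ : H.edgeSet → W × W) (n : H.edgeSet → ℕ)
    (hn : ∀ e, n e ≤ 1) (p q : Σ e : H.edgeSet, Fin (n e)) :
    ¬ (subdivGraph H σ n).Adj (Sum.inr p) (Sum.inr q) := by
  have hp := p.2.2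
  have hq := q.2.2
  have hp1 := hn p.1
  have hq1 := hn q.1
  unfold subdivGraph
  rw [SimpleGraph.fromRel_adj]
  rintro ⟨-, (⟨a, b, h, ha, hb, -⟩ | ⟨a, q, ha, hb, h⟩ | ⟨p', q', ha, hb, -, h⟩) |
      (⟨a, b, h, ha, hb, -⟩ | ⟨a, q, ha, hb, -⟩ | ⟨p', q', ha, hb, -, h⟩)⟩
  · cases ha
  · cases ha
  · cases ha; cases hb; omega
  · cases ha
  · cases ha
  · cases ha; cases hb; omega

/-- If all edges of `H` inside `A` are subdivided once, the 1-subdivision of `H[A]` embeds as an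
induced subgraph. -/
theorem exists_embedding (H : SimpleGraph W) (σ : H.edgeSet → W × W) (n : H.edgeSet → ℕ)
    (hσ : ValidOrientation H σ) (hn : ∀ e, n e ≤ 1) (A : Set W)
    (hA : ∀ x ∈ A, ∀ y ∈ A, ¬ (subdivGraph H σ n).Adj (Sum.inl x) (Sum.inl y))
    (σ' : (H.induce A).edgeSet → A × A) (hσ' : ValidOrientation (H.induce A) σ') :
    Nonempty (subdivGraph (H.induce A) σ' (fun _ => 1) ↪g subdivGraph H σ n) := by
  have key : ∀ e : (H.induce A).edgeSet, ∃ e' : H.edgeSet,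
      (e' : Sym2 W) = (e : Sym2 A).map Subtype.val ∧ n e' = 1 := by
    rintro ⟨e, he⟩
    induction e using Sym2.ind with
    | _ x y =>
      have h : H.Adj x y := he
      refine ⟨⟨s(x.1, y.1), h⟩, rfl, ?_⟩
      have h1 := hn ⟨s(x.1, y.1), h⟩
      have h2 : n ⟨s(x.1, y.1), h⟩ ≠ 0 := fun h0 =>
        hA x x.2 y y.2 ((adj_ll H σ n x y).2 ⟨h, h0⟩)
      omega
  choose E hE hE1 using key
  have hmem : ∀ (x : A) (e : (H.induce A).edgeSet),
      x.1 ∈ (E e : Sym2 W) ↔ x ∈ (e : Sym2 A) := by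
    intro x e
    rw [hE, Sym2.mem_map]
    constructor
    · rintro ⟨a, ha, hax⟩
      rwa [← Subtype.ext hax]
    · intro h; exact ⟨x, h, rfl⟩
  have hinj : Function.Injective E := by
    intro a b hab
    apply Subtype.ext
    apply Sym2.map.injective Subtype.val_injective
    rw [← hE, ← hE, hab]
  let g : A ⊕ (Σ _ : (H.induce A).edgeSet, Fin 1) → W ⊕ (Σ e : H.edgeSet, Fin (n e)) :=
    Sum.map Subtype.val (fun p => ⟨E p.1, ⟨0, by rw [hE1]; exact Nat.one_pos⟩⟩)
  have hg : Function.Injective g := by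
    apply Function.Injective.sumMap Subtype.val_injective
    rintro ⟨a, i⟩ ⟨b, j⟩ hab
    have : a = b := hinj (congrArg Sigma.fst hab)
    subst this
    rw [Subsingleton.elim i j]
  refine ⟨⟨⟨g, hg⟩, ?_⟩⟩
  have h1 : ∀ e : (H.induce A).edgeSet, (fun _ : (H.induce A).edgeSet => 1) e ≤ 1 :=
    fun _ => le_rfl
  have lr : ∀ x p, (subdivGraph H σ n).Adj (g (Sum.inl x)) (g (Sum.inr p)) ↔
      (subdivGraph (H.induce A) σ' (fun _ => 1)).Adj (Sum.inl x) (Sum.inr p) := by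
    intro x p
    rw [adj_lr _ _ _ hσ' h1]
    exact (adj_lr _ _ _ hσ hn _ _).trans (hmem x p.1)
  rintro (x | p) (y | q)
  · refine iff_of_false (hA x x.2 y y.2) ?_
    rw [adj_ll]
    rintro ⟨_, h⟩
    exact one_ne_zero h
  · exact lr x q
  · exact (SimpleGraph.adj_comm _ _ _).trans ((lr y p).trans (SimpleGraph.adj_comm _ _ _))
  · exact iff_of_false (adj_rr _ _ _ hn _ _) (adj_rr _ _ _ h1 _ _)

theorem stmt18 (k : ℤ) (α : Type) [Fintype α] (H : SimpleGraph α)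
    (hχ : ((((k - 1) ^ 2 + 1).toNat : ℕ∞) ≤ H.chromaticNumber))
    (V : Type) [Fintype V] (G : SimpleGraph V)
    (hsub : ∃ (σ : H.edgeSet → α × α) (n : H.edgeSet → ℕ), ValidOrientation H σ ∧
      (∀ e, n e ≤ 1) ∧ Nonempty (G ≃g subdivGraph H σ n)) :
    ∃ s : Set V,
      ((k.toNat : ℕ∞) ≤ (G.induce s).chromaticNumber) ∨
      (∃ (β : Type) (H' : SimpleGraph β) (σ' : H'.edgeSet → β × β),
        ValidOrientation H' σ' ∧
        Nonempty ((G.induce s) ≃g subdivGraph H' σ' (fun _ => 1)) ∧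
        (k.toNat : ℕ∞) ≤ H'.chromaticNumber) := by
  obtain ⟨σ, n, hσ, hn, ⟨f⟩⟩ := hsub
  rcases le_or_gt k 0 with hk | hk
  · refine ⟨Set.univ, Or.inl ?_⟩
    rw [Int.toNat_of_nonpos hk]
    simp
  obtain ⟨m, rfl⟩ : ∃ m : ℕ, k = m + 1 := ⟨(k - 1).toNat, by omega⟩
  have e1 : (((m : ℤ) + 1 - 1) ^ 2 + 1).toNat = m * m + 1 := by
    have : ((m : ℤ) + 1 - 1) ^ 2 + 1 = ((m * m + 1 : ℕ) : ℤ) := by push_cast; ring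
    rw [this, Int.toNat_natCast]
  have e2 : ((m : ℤ) + 1).toNat = m + 1 := by omega
  rw [e1] at hχ
  rw [e2]
  have low : ∀ {β : Type} (K : SimpleGraph β), ¬ K.Colorable m →
      ((m + 1 : ℕ) : ℕ∞) ≤ K.chromaticNumber := by
    intro β K hK
    rw [SimpleGraph.le_chromaticNumber_iff_colorable]
    intro c hc
    by_contra hlt
    exact hK (hc.mono (by omega))
  by_cases hC : ((subdivGraph H σ n).comap Sum.inl).Colorable m
  · obtain ⟨C⟩ := hC
    have : ∃ i, ¬ (H.induce {x | C x = i}).Colorable m := by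
      by_contra hcon
      push Not at hcon
      have D := fun i => (hcon i).some
      have hcol : H.Colorable (m * m) := by
        have c : H.Coloring (Fin m × Fin m) :=
          SimpleGraph.Coloring.mk (fun x => (C x, D (C x) ⟨x, rfl⟩)) (by
            intro x y hxy heq
            obtain ⟨h1, h2⟩ := Prod.mk.inj heq
            have aux : ∀ i (hi : C y = i), D (C y) ⟨y, rfl⟩ = D i ⟨y, hi⟩ := by
              rintro i rfl; rfl
            rw [aux (C x) h1.symm] at h2
            exact (D (C x)).valid (v := ⟨x, rfl⟩) (w := ⟨y, h1.symm⟩) hxy h2)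
        simpa using c.colorable
      have := SimpleGraph.le_chromaticNumber_iff_colorable.1 hχ _ hcol
      omega
    obtain ⟨i, hi⟩ := this
    obtain ⟨σ', hσ'⟩ : ∃ σ', ValidOrientation (H.induce {x | C x = i}) σ' := by
      have : ∀ e : (H.induce {x | C x = i}).edgeSet, ∃ p : {x | C x = i} × {x | C x = i},
          s(p.1, p.2) = (e : Sym2 {x | C x = i}) := by
        rintro ⟨e, he⟩
        induction e using Sym2.ind with
        | _ x y => exact ⟨(x, y), rfl⟩
      choose σ' hσ' using this
      exact ⟨σ', hσ'⟩
    obtain ⟨g⟩ := exists_embedding H σ n hσ hn {x | C x = i}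
      (fun x hx y hy h => C.valid (v := x) (w := y) h (hx.trans hy.symm)) _ hσ'
    let g' := g.trans f.symm.toEmbedding
    refine ⟨Set.range g', Or.inr ⟨_, _, _, hσ', ⟨?_⟩, low _ hi⟩⟩
    exact (RelIso.mk (Equiv.ofInjective g' g'.injective) (g'.map_rel_iff)).symm
  · refine ⟨Set.univ, Or.inl (low _ ?_)⟩
    rintro ⟨c⟩
    exact hC ⟨SimpleGraph.Coloring.mk (fun x => c ⟨f.symm (Sum.inl x), trivial⟩) (by
      intro x y hxy
      exact c.valid (f.symm.map_rel_iff.2 hxy))⟩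


end CFPaper
end
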